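/- arXiv:1605.09701 — 2 statements merged into one kernel-verified Lean document; each statement's English description precedes it below -/
import Mathlib

section
/- Let P be the R-measure. The set {(1/2, 7/(6√3)), (1/2, 1/(6√3))} is an optimal set of two-means for P, and the corresponding quantization error is V₂(P) = 5/54. -/
open MeasureTheory ENNReal

noncomputable section

abbrev E2 : Type := EuclideanSpace ℝ (Fin 2)

/-- The point (a, b) of the Euclidean plane. -/
def pt (a b : ℝ) : E2 := (WithLp.equiv 2 (Fin 2 → ℝ)).symm ![a, b]

/-- S₁(x) = x/3. -/
def S1 : E2 → E2 := fun x => (3 : ℝ)⁻¹ • x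

/-- S₂(x) = x/3 + (2/3, 0). -/
def S2 : E2 → E2 := fun x => (3 : ℝ)⁻¹ • x + pt (2/3) 0

/-- S₃(x) = x/3 + (1/3, √3/3). -/
def S3 : E2 → E2 := fun x => (3 : ℝ)⁻¹ • x + pt (1/3) (Real.sqrt 3 / 3)

def Smap : Fin 3 → E2 → E2 := ![S1, S2, S3]

/-- For a word ω = ω₁⋯ω_k ∈ {1,2,3}^k, the composition S_ω = S_{ω₁} ∘ ⋯ ∘ S_{ω_k}. -/
def Sword {k : ℕ} (ω : Fin k → Fin 3) : E2 → E2 :=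
  fun x => (List.ofFn fun i => Smap (ω i)).foldr (fun g y => g y) x

/-- The closed triangle with vertices (0,0), (1,0), (1/2, √3/2). -/
def Tri : Set E2 := convexHull ℝ {pt 0 0, pt 1 0, pt (1/2) (Real.sqrt 3 / 2)}

/-- The distortion error ∫ min_{a ∈ α} ‖x − a‖² dμ of a set α of points. -/
def err (μ : Measure E2) (α : Set E2) : ℝ≥0∞ :=
  ∫⁻ x, ⨅ a ∈ α, ENNReal.ofReal (‖x - a‖ ^ 2) ∂μ

/-- The n-th quantization error V_n(μ). -/
def quantErr (μ : Measure E2) (n : ℕ) : ℝ≥0∞ :=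
  ⨅ (α : Set E2) (_ : α.Finite ∧ α.ncard ≤ n), err μ α

/-- α is an optimal set of n-means for μ. -/
def IsOptimal (μ : Measure E2) (n : ℕ) (α : Set E2) : Prop :=
  α.Finite ∧ α.ncard ≤ n ∧ err μ α = quantErr μ n

theorem lin_bound (F A B s : ℝ) (h0 : 0 ≤ F) (h : F ≤ A + B * s)
    (hc : 3 / 2 * A ^ 2 + B ^ 2 / 9 ≤ 1) : F ^ 2 ≤ 9 * s ^ 2 + 2 / 3 := by
  have h1 : F ^ 2 ≤ (A + B * s) ^ 2 := by gcongr
  have h2 : (A + B * s) ^ 2 ≤ (9 * s ^ 2 + 2 / 3) * (3 / 2 * A ^ 2 + B ^ 2 / 9) := by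
    nlinarith [sq_nonneg (27 * A * s - 2 * B)]
  have h3 : (9 * s ^ 2 + 2 / 3) * (3 / 2 * A ^ 2 + B ^ 2 / 9) ≤ (9 * s ^ 2 + 2 / 3) * 1 := by
    gcongr
  linarith

theorem quad_cond (A B a b : ℝ) (hA0 : -a ≤ A) (hA : A ≤ a) (hB0 : -b ≤ B) (hB : B ≤ b)
    (h : 3 / 2 * a ^ 2 + b ^ 2 / 9 ≤ 1) : 3 / 2 * A ^ 2 + B ^ 2 / 9 ≤ 1 := by
  have h1 : A ^ 2 ≤ a ^ 2 := sq_le_sq' hA0 hA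
  have h2 : B ^ 2 ≤ b ^ 2 := sq_le_sq' hB0 hB
  linarith

theorem condB (M N r : ℝ) (hNM : N ≤ M) (hN : 0 < N)
    (hM3 : M ≤ 385 / 1000)
    (hr : r * N = 963 / 10000) (hr0 : 288 / 1000 ≤ r) (hr1 : r ≤ 502 / 1000) :
    3 / 2 * (2 * M + 963 / 10000 - 2 * r * M) ^ 2 + (1 + 2 * r) ^ 2 / 9 ≤ 1 := by
  have h0 : 0 ≤ M * (1 - r) := mul_nonneg (by linarith) (by linarith)
  have h1 : r * N ≤ r * M := mul_le_mul_of_nonneg_left hNM (by linarith)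
  rcases le_total r (34 / 100) with h | h
  · exact quad_cond _ _ (6737 / 10000) (168 / 100) (by nlinarith only [h0]) (by linarith)
      (by linarith) (by linarith) (by norm_num)
  · have h2 : M * r ≥ M * (34 / 100) := mul_le_mul_of_nonneg_left h (by linarith)
    exact quad_cond _ _ (6046 / 10000) (2004 / 1000) (by nlinarith only [h0])
      (by nlinarith only [h2, hM3])
      (by linarith) (by linarith) (by norm_num)

theorem condC (M N p : ℝ) (hNM : N ≤ M) (hN : 0 < N) (hN1 : N ≤ 1 / 3)
    (hq : N ^ 2 + M ^ 2 - M * N = 1 / 9)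
    (hM1 : 1 / 3 ≤ M)
    (hp : p * M = 963 / 10000) (hp0 : 25 / 100 ≤ p) (hp1 : p ≤ 289 / 1000) :
    3 / 2 * (M + N + 963 / 10000 + (M - N) * (1 - 2 * p)) ^ 2 + (1 - 2 * p) ^ 2 / 9 ≤ 1 := by
  have e : M + N + 963 / 10000 + (M - N) * (1 - 2 * p) = 2 * M - 963 / 10000 + 2 * (p * N) := by
    linear_combination (-2) * hp
  have h0 : 0 ≤ p * N := mul_nonneg (by linarith) hN.le
  have key : 2 * M + 2 * (p * N) ≤ 8970 / 10000 := by
    rcases le_total M (345 / 1000) with h | h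
    · have : p * N ≤ 289 / 1000 * (1 / 3) := mul_le_mul hp1 hN1 hN.le (by norm_num)
      linarith
    · have h1 : p ≤ 2792 / 10000 := by
        by_contra hc
        push Not at hc
        have : 2792 / 10000 * (345 / 1000) < p * M := by
          apply mul_lt_mul hc h (by norm_num) (by linarith)
        norm_num at this; linarith
      have h2 : p * N ≤ 2792 / 10000 * N := mul_le_mul_of_nonneg_right h1 hN.le
      have h3 : (2 * M + 5584 / 10000 * N) ^ 2 ≤ (8970 / 10000) ^ 2 := by
        nlinarith only [hq, sq_nonneg (M - 148 / 100 * N), sq_nonneg (M - 14966 / 10000 * N),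
          sq_nonneg (M - 15 / 10 * N)]
      have h4 := abs_le_of_sq_le_sq h3 (by norm_num)
      linarith [le_of_abs_le h4]
  rw [e]
  exact quad_cond _ _ (8008 / 10000) (1 / 2) (by linarith) (by linarith) (by linarith)
    (by linarith) (by norm_num)

theorem condC' (M N r : ℝ) (hNM : N ≤ M) (hN2 : 192 / 1000 ≤ N)
    (hq : N ^ 2 + M ^ 2 - M * N = 1 / 9)
    (hM3 : M ≤ 385 / 1000) (hr0 : 288 / 1000 ≤ r) (hr1 : r ≤ 502 / 1000) :
    3 / 2 * (M + N + 963 / 10000 - (M - N) * (1 - 2 * r)) ^ 2 + (2 * r - 1) ^ 2 / 9 ≤ 1 := by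
  have h1 : (M + N) ^ 2 ≤ (2 / 3) ^ 2 := by nlinarith only [hq, sq_nonneg (M - N)]
  have h2 := le_of_abs_le (abs_le_of_sq_le_sq h1 (by norm_num))
  have h3 : (M - N) * (1 - 2 * r) ≥ (M - N) * (-4 / 1000) :=
    mul_le_mul_of_nonneg_left (by linarith) (by linarith)
  have h4 : (M - N) * (1 - 2 * r) ≤ (M - N) * 1 :=
    mul_le_mul_of_nonneg_left (by linarith) (by linarith)
  exact quad_cond _ _ (765 / 1000) (1 / 2) (by linarith) (by linarith) (by linarith)
    (by linarith) (by norm_num)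

theorem condD (N p : ℝ) (hN : 0 < N) (hN1 : N ≤ 1 / 3)
    (hp0 : 25 / 100 ≤ p) (hp1 : p ≤ 289 / 1000) :
    3 / 2 * (2 * N + 2 * (963 / 10000) - 2 * p * N) ^ 2 + (-1 - 2 * p) ^ 2 / 9 ≤ 1 := by
  have h1 : 25 / 100 * N ≤ p * N := mul_le_mul_of_nonneg_right hp0 hN.le
  have h2 : p * N ≤ 1 * N := mul_le_mul_of_nonneg_right (by linarith) hN.le
  exact quad_cond _ _ (6927 / 10000) (1578 / 1000) (by linarith) (by linarith) (by linarith)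
    (by linarith) (by norm_num)

theorem le_of_mul_eq (x y a b : ℝ) (hx : 0 < x) (h : y * x = a) (hab : a ≤ b * x) : y ≤ b := by
  rw [← h] at hab; exact le_of_mul_le_mul_right hab hx

theorem ge_of_mul_eq (x y a b : ℝ) (hx : 0 < x) (h : y * x = a) (hab : b * x ≤ a) : b ≤ y := by
  rw [← h] at hab; exact le_of_mul_le_mul_right hab hx

theorem core (w : ℝ → ℝ) (M N s : ℝ) (hNM : N ≤ M) (hMN : M ≤ 2 * N)
    (hq : N ^ 2 + M ^ 2 - M * N = 1 / 9)
    (H0 : ∀ z, 0 ≤ w z)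
    (H1 : ∀ z, M / 2 ≤ z → w z ≤ z)
    (H2 : ∀ z, 0 ≤ z → z ≤ M / 2 → M * w z ≤ M * z + 963 / 10000 * (M - 2 * z))
    (H3 : ∀ z, -(N / 2) ≤ z → z ≤ 0 → N * w z ≤ -(N * z) + 963 / 10000 * (N + 2 * z))
    (H4 : ∀ z, z ≤ -(N / 2) → w z ≤ -z) :
    (w (s + N) + w (s + M - N) + w (s - M)) ^ 2 ≤ 9 * s ^ 2 + 2 / 3 := by
  have hN0 : 0 ≤ N := by linarith
  have hM1 : 1 / 3 ≤ M := by nlinarith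
  have hM2 : M ^ 2 ≤ 4 / 27 := by nlinarith [sq_nonneg (2 * N - M)]
  have hM3 : M ≤ 385 / 1000 := by nlinarith
  have hN1 : N ≤ 1 / 3 := by nlinarith
  have hN2 : 192 / 1000 ≤ N := by nlinarith
  have hN : 0 < N := by linarith
  have hM : 0 < M := by linarith
  have hF : 0 ≤ w (s + N) + w (s + M - N) + w (s - M) := by
    have := H0 (s + N); have := H0 (s + M - N); have := H0 (s - M); linarith
  -- division form
  obtain ⟨p, hp⟩ : ∃ p, p * M = 963 / 10000 := ⟨963 / 10000 / M, by field_simp⟩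
  obtain ⟨r, hr⟩ : ∃ r, r * N = 963 / 10000 := ⟨963 / 10000 / N, by field_simp⟩
  have hp0 : 25 / 100 ≤ p := ge_of_mul_eq M p _ _ hM hp (by linarith)
  have hp1 : p ≤ 289 / 1000 := le_of_mul_eq M p _ _ hM hp (by linarith)
  have hr0 : 288 / 1000 ≤ r := ge_of_mul_eq N r _ _ hN hr (by linarith)
  have hr1 : r ≤ 502 / 1000 := le_of_mul_eq N r _ _ hN hr (by linarith)
  have G2 : ∀ z, 0 ≤ z → z ≤ M / 2 → w z ≤ z + (963 / 10000 - 2 * p * z) := by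
    intro z h1 h2
    have h := H2 z h1 h2
    have e : M * z + 963 / 10000 * (M - 2 * z) = M * (z + (963 / 10000 - 2 * p * z)) := by
      rw [← hp]; ring
    rw [e] at h
    exact le_of_mul_le_mul_left h hM
  have G3 : ∀ z, -(N / 2) ≤ z → z ≤ 0 → w z ≤ -z + (963 / 10000 + 2 * r * z) := by
    intro z h1 h2
    have h := H3 z h1 h2
    have e : -(N * z) + 963 / 10000 * (N + 2 * z) = N * (-z + (963 / 10000 + 2 * r * z)) := by
      rw [← hr]; ring
    rw [e] at h
    exact le_of_mul_le_mul_left h hN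
  have K2 : ∀ z, 0 ≤ z → w z ≤ z + 963 / 10000 := by
    intro z h1
    rcases le_total z (M / 2) with h2 | h2
    · have := G2 z h1 h2; have := mul_nonneg (show 0 ≤ p by linarith) h1; linarith
    · have := H1 z h2; linarith
  have K3 : ∀ z, z ≤ 0 → w z ≤ -z + 963 / 10000 := by
    intro z h1
    rcases le_total (-(N / 2)) z with h2 | h2
    · have := G3 z h2 h1; have := mul_nonneg (show 0 ≤ r by linarith) (neg_nonneg.2 h1); linarith
    · have := H4 z h2; linarith
  rcases le_total (3 / 2 * M) s with c1 | c1
  · have e1 := H1 (s + N) (by linarith)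
    have e2 := H1 (s + M - N) (by linarith)
    have e3 := H1 (s - M) (by linarith)
    refine lin_bound _ 0 3 s hF (by linarith) (by norm_num)
  rcases le_total M s with c2 | c2
  · have e1 := H1 (s + N) (by linarith)
    have e2 := H1 (s + M - N) (by linarith)
    have e3 := K2 (s - M) (by linarith)
    have h : (w (s + N) + w (s + M - N) + w (s - M)) ^ 2 ≤ (3 * s + 963 / 10000) ^ 2 :=
      pow_le_pow_left₀ hF (by linarith) 2
    nlinarith only [h, c1, hM3]
  rcases le_total (M - N / 2) s with c3 | c3
  · have e1 := H1 (s + N) (by linarith)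
    have e2 := H1 (s + M - N) (by linarith)
    have e3 := G3 (s - M) (by linarith) (by linarith)
    refine lin_bound _ (2 * M + 963 / 10000 - 2 * r * M) (1 + 2 * r) s hF (by linarith) ?_
    exact condB M N r hNM hN hM3 hr hr0 hr1
  rcases le_total (N - M / 2) s with c4 | c4
  · have e1 := H1 (s + N) (by linarith)
    have e2 := H1 (s + M - N) (by linarith)
    have e3 := H4 (s - M) (by linarith)
    refine lin_bound _ (2 * M) 1 s hF (by linarith) (by linarith)
  have e3 := H4 (s - M) (by linarith)
  rcases le_total (M / 2 - N) s with c5 | c5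
  · have e1 := H1 (s + N) (by linarith)
    rcases le_total (N - M) s with c6 | c6
    · have e2 := G2 (s + M - N) (by linarith) (by linarith)
      -- C+
      refine lin_bound _ (M + N + 963 / 10000 + (M - N) * (1 - 2 * p)) (1 - 2 * p) s hF
        (by linarith) ?_
      exact condC M N p hNM hN hN1 hq hM1 hp hp0 hp1
    · have e2 := G3 (s + M - N) (by linarith) (by linarith)
      refine lin_bound _ (M + N + 963 / 10000 - (M - N) * (1 - 2 * r)) (2 * r - 1) s hF
        (by linarith) ?_
      exact condC' M N r hNM hN2 hq hM3 hr0 hr1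
  rcases le_total (-N) s with c7 | c7
  · have e1 := G2 (s + N) (by linarith) (by linarith)
    rcases le_total (N - M) s with c6 | c6
    · have e2 := G2 (s + M - N) (by linarith) (by linarith)
      refine lin_bound _ (2 * M) (1 - 4 * p) s hF (by linarith)
        (quad_cond _ _ (77 / 100) (1 / 2) (by linarith) (by linarith) (by linarith)
          (by linarith) (by norm_num))
    · have e2 := K3 (s + M - N) (by linarith)
      refine lin_bound _ (2 * N + 2 * (963 / 10000) - 2 * p * N) (-1 - 2 * p) s hF
        (by linarith) ?_
      exact condD N p hN hN1 hp0 hp1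
  rcases le_total (-(3 / 2) * N) s with c8 | c8
  · have e1 := K3 (s + N) (by linarith)
    have e2 := K3 (s + M - N) (by linarith)
    have h : (w (s + N) + w (s + M - N) + w (s - M)) ^ 2 ≤ (-3 * s + 2 * (963 / 10000)) ^ 2 :=
      pow_le_pow_left₀ hF (by linarith) 2
    nlinarith only [h, c8, hN1]
  · have e1 := H4 (s + N) (by linarith)
    have e2 := H4 (s + M - N) (by linarith)
    refine lin_bound _ 0 (-3) s hF (by linarith) (by norm_num)

theorem mid0 {Ω : Type*} [MeasurableSpace Ω] (P : Measure Ω) [IsProbabilityMeasure P]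
    (Y : Ω → ℝ) (hi : Integrable Y P) (h0 : ∫ x, Y x ∂P = 0)
    (hq : ∫ x, |Y x| ∂P ≤ 2889 / 10000) (m1 m2 m3 s : ℝ)
    (hs : m1 + m2 + m3 = 0) (hss : m1 ^ 2 + m2 ^ 2 + m3 ^ 2 = 2 / 9)
    (bd : ∀ L U, L ≤ m1 → L ≤ m2 → L ≤ m3 → m1 ≤ U → m2 ≤ U → m3 ≤ U →
      ∀ᵐ x ∂P, 3 / 2 * L ≤ Y x ∧ Y x ≤ 3 / 2 * U)
    (h12 : m1 ≤ m2) (h23 : m2 ≤ m3) (h2 : m2 ≤ 0) :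
    (∫ x, |Y x - 3 * (s - m1)| ∂P + ∫ x, |Y x - 3 * (s - m2)| ∂P
      + ∫ x, |Y x - 3 * (s - m3)| ∂P) ^ 2 ≤ 81 * s ^ 2 + 6 := by
  have hb := bd m1 m3 le_rfl h12 (h12.trans h23) (h12.trans h23) h23 le_rfl
  have hI : ∀ t : ℝ, Integrable (fun x => |Y x - t|) P := fun t =>
    (hi.sub (integrable_const t)).abs
  have hA : Integrable (fun x => |Y x|) P := hi.abs
  have hm3 : 0 ≤ m3 := by linarith
  have hm1 : m1 ≤ 0 := by linarith
  -- chord bound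
  have chord : ∀ t e : ℝ, (∀ᵐ x ∂P, e * |Y x - t| ≤ (e - |t|) * |Y x| + |t| * (e - (SignType.sign t : ℝ) * Y x)) →
      e * ∫ x, |Y x - t| ∂P ≤ (e - |t|) * ∫ x, |Y x| ∂P + |t| * e := by
    intro t e h
    have h3 := integral_mono_ae ((hI t).const_mul e)
      ((hA.const_mul (e - |t|)).add
        (((integrable_const e).sub (hi.const_mul (SignType.sign t : ℝ))).const_mul |t|)) h
    simp only [Pi.add_apply] at h3
    rw [integral_const_mul, integral_add (hA.const_mul _)
      (((integrable_const e).sub (hi.const_mul (SignType.sign t : ℝ))).const_mul |t|)] at h3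
    simp only [Pi.sub_apply] at h3
    rw [integral_const_mul, integral_const_mul, integral_sub (integrable_const e) (hi.const_mul _),
      integral_const_mul, h0] at h3
    simpa using h3
  have C := core (fun z => (∫ x, |Y x - 3 * z| ∂P) / 3) m3 (-m1) s (by linarith) (by linarith)
    (by have : m2 = -m1 - m3 := by linarith
        subst this; linarith) ?_ ?_ ?_ ?_ ?_
  · have e1 : s + -m1 = s - m1 := by ring
    have e2 : s + m3 - -m1 = s - m2 := by linarith
    simp only [e1, e2] at C
    nlinarith only [C]
  · intro z
    have : 0 ≤ ∫ x, |Y x - 3 * z| ∂P := integral_nonneg fun x => abs_nonneg _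
    linarith
  · intro z hz
    have : ∫ x, |Y x - 3 * z| ∂P = ∫ x, (3 * z - Y x) ∂P := by
      apply integral_congr_ae
      filter_upwards [hb] with x hx
      rw [abs_of_nonpos (by linarith)]; ring
    rw [integral_sub (integrable_const _) hi, h0] at this
    simp at this
    simp only [this]; linarith
  · intro z hz0 hz
    rcases eq_or_lt_of_le hz0 with rfl | hz0'
    · simp only [mul_zero, sub_zero]
      nlinarith only [hq, hm3]
    have h := chord (3 * z) (3 / 2 * m3) ?_
    · rw [abs_of_nonneg (by linarith)] at h
      have : (3 / 2 * m3 - 3 * z) * ∫ x, |Y x| ∂P ≤ (3 / 2 * m3 - 3 * z) * (2889 / 10000) :=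
        mul_le_mul_of_nonneg_left hq (by linarith)
      linarith
    · filter_upwards [hb] with x hx
      rw [sign_pos (by linarith), abs_of_nonneg (show 0 ≤ 3 * z by linarith)]
      simp only [SignType.coe_one, one_mul]
      have a1 : |Y x| * (3 / 2 * m3 - 3 * z) ≥ Y x * (3 / 2 * m3 - 3 * z) :=
        mul_le_mul_of_nonneg_right (le_abs_self _) (by linarith)
      have a2 : |Y x| * (3 / 2 * m3 - 3 * z) ≥ (-Y x) * (3 / 2 * m3 - 3 * z) :=
        mul_le_mul_of_nonneg_right (neg_le_abs _) (by linarith)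
      rcases abs_cases (Y x - 3 * z) with ⟨h, h'⟩ | ⟨h, h'⟩
      · rw [h]
        have := mul_nonneg hz0 (sub_nonneg.2 hx.2)
        nlinarith only [a1, this]
      · rw [h]; linarith
  · intro z hz hz0
    rcases eq_or_lt_of_le hz0 with rfl | hz0'
    · simp only [mul_zero, sub_zero]
      nlinarith only [hq, hm1]
    have h := chord (3 * z) (-(3 / 2 * m1)) ?_
    · rw [abs_of_nonpos (by linarith)] at h
      have : (-(3 / 2 * m1) + 3 * z) * ∫ x, |Y x| ∂P ≤ (-(3 / 2 * m1) + 3 * z) * (2889 / 10000) :=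
        mul_le_mul_of_nonneg_left hq (by linarith)
      linarith
    · filter_upwards [hb] with x hx
      rw [sign_neg (by linarith), abs_of_nonpos (show 3 * z ≤ 0 by linarith)]
      simp only [SignType.coe_neg_one]
      have a1 : |Y x| * (-(3 / 2 * m1) + 3 * z) ≥ Y x * (-(3 / 2 * m1) + 3 * z) :=
        mul_le_mul_of_nonneg_right (le_abs_self _) (by linarith)
      have a2 : |Y x| * (-(3 / 2 * m1) + 3 * z) ≥ (-Y x) * (-(3 / 2 * m1) + 3 * z) :=
        mul_le_mul_of_nonneg_right (neg_le_abs _) (by linarith)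
      rcases abs_cases (Y x - 3 * z) with ⟨h, h'⟩ | ⟨h, h'⟩
      · rw [h]; linarith
      · rw [h]
        have := mul_nonneg (neg_nonneg.2 hz0) (sub_nonneg.2 hx.1)
        nlinarith only [a2, this]
  · intro z hz
    have : ∫ x, |Y x - 3 * z| ∂P = ∫ x, (Y x - 3 * z) ∂P := by
      apply integral_congr_ae
      filter_upwards [hb] with x hx
      rw [abs_of_nonneg (by linarith)]
    rw [integral_sub hi (integrable_const _), h0] at this
    simp at this
    simp only [this]; linarith

theorem mid1 {Ω : Type*} [MeasurableSpace Ω] (P : Measure Ω) [IsProbabilityMeasure P]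
    (Y : Ω → ℝ) (hi : Integrable Y P) (h0 : ∫ x, Y x ∂P = 0)
    (hq : ∫ x, |Y x| ∂P ≤ 2889 / 10000) (m1 m2 m3 s : ℝ)
    (hs : m1 + m2 + m3 = 0) (hss : m1 ^ 2 + m2 ^ 2 + m3 ^ 2 = 2 / 9)
    (bd : ∀ L U, L ≤ m1 → L ≤ m2 → L ≤ m3 → m1 ≤ U → m2 ≤ U → m3 ≤ U →
      ∀ᵐ x ∂P, 3 / 2 * L ≤ Y x ∧ Y x ≤ 3 / 2 * U)
    (h12 : m1 ≤ m2) (h23 : m2 ≤ m3) :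
    (∫ x, |Y x - 3 * (s - m1)| ∂P + ∫ x, |Y x - 3 * (s - m2)| ∂P
      + ∫ x, |Y x - 3 * (s - m3)| ∂P) ^ 2 ≤ 81 * s ^ 2 + 6 := by
  rcases le_total m2 0 with h | h
  · exact mid0 P Y hi h0 hq m1 m2 m3 s hs hss bd h12 h23 h
  · have := mid0 P (fun x => - Y x) hi.neg (by rw [integral_neg, h0, neg_zero])
      (by simpa only [abs_neg] using hq) (-m3) (-m2) (-m1) (-s) (by linarith) (by linarith)
      (by intro L U a1 a2 a3 a4 a5 a6
          filter_upwards [bd (-U) (-L) (by linarith) (by linarith) (by linarith) (by linarith)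
            (by linarith) (by linarith)] with x hx
          constructor <;> linarith [hx.1, hx.2]) (by linarith) (by linarith) (by linarith)
    have e : ∀ m x, |-Y x - 3 * (-s - -m)| = |Y x - 3 * (s - m)| := by
      intro m x
      rw [← abs_neg]; congr 1; ring
    simp only [e] at this
    nlinarith only [this]

theorem mid2 {Ω : Type*} [MeasurableSpace Ω] (P : Measure Ω) [IsProbabilityMeasure P]
    (Y : Ω → ℝ) (hi : Integrable Y P) (h0 : ∫ x, Y x ∂P = 0)
    (hq : ∫ x, |Y x| ∂P ≤ 2889 / 10000) (m1 m2 m3 s : ℝ)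
    (hs : m1 + m2 + m3 = 0) (hss : m1 ^ 2 + m2 ^ 2 + m3 ^ 2 = 2 / 9)
    (bd : ∀ L U, L ≤ m1 → L ≤ m2 → L ≤ m3 → m1 ≤ U → m2 ≤ U → m3 ≤ U →
      ∀ᵐ x ∂P, 3 / 2 * L ≤ Y x ∧ Y x ≤ 3 / 2 * U) :
    (∫ x, |Y x - 3 * (s - m1)| ∂P + ∫ x, |Y x - 3 * (s - m2)| ∂P
      + ∫ x, |Y x - 3 * (s - m3)| ∂P) ^ 2 ≤ 81 * s ^ 2 + 6 := by
  have key := mid1 P Y hi h0 hq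
  rcases le_total m1 m2 with h12 | h12 <;> rcases le_total m2 m3 with h23 | h23 <;>
    rcases le_total m1 m3 with h13 | h13
  · exact key m1 m2 m3 s hs hss bd h12 h23
  · exact key m1 m2 m3 s hs hss bd h12 h23
  · have := key m1 m3 m2 s (by linarith) (by linarith)
      (fun L U a b c d e f => bd L U a c b d f e) h13 h23
    linarith
  · have := key m3 m1 m2 s (by linarith) (by linarith)
      (fun L U a b c d e f => bd L U b c a e f d) h13 h12
    linarith
  · have := key m2 m1 m3 s (by linarith) (by linarith)
      (fun L U a b c d e f => bd L U b a c e d f) h12 h13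
    linarith
  · have := key m2 m3 m1 s (by linarith) (by linarith)
      (fun L U a b c d e f => bd L U c a b f d e) h23 h13
    linarith
  · have := key m3 m2 m1 s (by linarith) (by linarith)
      (fun L U a b c d e f => bd L U c b a f e d) h23 h12
    linarith
  · have := key m3 m2 m1 s (by linarith) (by linarith)
      (fun L U a b c d e f => bd L U c b a f e d) h23 h12
    linarith

theorem pt0 (a b : ℝ) : pt a b 0 = a := by simp [pt]
theorem pt1 (a b : ℝ) : pt a b 1 = b := by simp [pt]
theorem S1_0 (x : E2) : S1 x 0 = x 0 / 3 := by simp [S1]; ring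
theorem S1_1 (x : E2) : S1 x 1 = x 1 / 3 := by simp [S1]; ring
theorem S2_0 (x : E2) : S2 x 0 = x 0 / 3 + 2 / 3 := by simp [S2, pt0]; ring
theorem S2_1 (x : E2) : S2 x 1 = x 1 / 3 := by simp [S2, pt1]; ring
theorem S3_0 (x : E2) : S3 x 0 = x 0 / 3 + 1 / 3 := by simp [S3, pt0]; ring
theorem S3_1 (x : E2) : S3 x 1 = x 1 / 3 + √3 / 3 := by simp [S3, pt1]; ring
theorem S1_c : Continuous S1 := by unfold S1; fun_prop
theorem S2_c : Continuous S2 := by unfold S2; fun_prop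
theorem S3_c : Continuous S3 := by unfold S3; fun_prop
theorem nsq (x : E2) : ‖x‖ ^ 2 = x 0 ^ 2 + x 1 ^ 2 := by
  rw [EuclideanSpace.norm_sq_eq]; simp [Fin.sum_univ_two]

theorem P_apply (P : Measure E2)
    (hP : P = (3 : ℝ≥0∞)⁻¹ • (P.map S1 + P.map S2 + P.map S3)) (A : Set E2)
    (hA : MeasurableSet A) :
    P A = 3⁻¹ * (P (S1 ⁻¹' A) + P (S2 ⁻¹' A) + P (S3 ⁻¹' A)) := by
  conv_lhs => rw [hP]
  simp [Measure.map_apply S1_c.measurable hA, Measure.map_apply S2_c.measurable hA,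
    Measure.map_apply S3_c.measurable hA]
  ring

/-- a continuous function which shrinks at most by the factor 3 is a.e. nonnegative -/
theorem nonneg_ae (P : Measure E2) [IsProbabilityMeasure P]
    (hP : P = (3 : ℝ≥0∞)⁻¹ • (P.map S1 + P.map S2 + P.map S3)) (l : E2 → ℝ) (hl : Continuous l)
    (h1 : ∀ x, l x / 3 ≤ l (S1 x)) (h2 : ∀ x, l x / 3 ≤ l (S2 x)) (h3 : ∀ x, l x / 3 ≤ l (S3 x)) :
    ∀ᵐ x ∂P, 0 ≤ l x := by
  have step : ∀ r : ℝ, P {x | l x < -r} ≤ P {x | l x < -(3 * r)} := by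
    intro r
    rw [P_apply P hP _ (measurableSet_lt hl.measurable measurable_const)]
    have a1 : P (S1 ⁻¹' {x | l x < -r}) ≤ P {x | l x < -(3 * r)} := by
      apply measure_mono; intro x hx
      simp only [Set.mem_preimage, Set.mem_ofPred_eq] at *; linarith [h1 x]
    have a2 : P (S2 ⁻¹' {x | l x < -r}) ≤ P {x | l x < -(3 * r)} := by
      apply measure_mono; intro x hx
      simp only [Set.mem_preimage, Set.mem_ofPred_eq] at *; linarith [h2 x]
    have a3 : P (S3 ⁻¹' {x | l x < -r}) ≤ P {x | l x < -(3 * r)} := by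
      apply measure_mono; intro x hx
      simp only [Set.mem_preimage, Set.mem_ofPred_eq] at *; linarith [h3 x]
    calc _ ≤ (3 : ℝ≥0∞)⁻¹ * (P {x | l x < -(3 * r)} + P {x | l x < -(3 * r)}
          + P {x | l x < -(3 * r)}) := by gcongr
      _ = ((3 : ℝ≥0∞)⁻¹ * 3) * P {x | l x < -(3 * r)} := by ring
      _ = _ := by rw [ENNReal.inv_mul_cancel (by norm_num) (by norm_num), one_mul]
  have stepn : ∀ (n : ℕ) (r : ℝ), P {x | l x < -r} ≤ P {x | l x < -(3 ^ n * r)} := by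
    intro n
    induction n with
    | zero => intro r; simp
    | succ n ih =>
      intro r
      refine (step r).trans ((ih (3 * r)).trans (le_of_eq ?_))
      congr 2; ext x; rw [pow_succ, mul_assoc]
  have zero : ∀ r : ℝ, 0 < r → P {x | l x < -r} = 0 := by
    intro r hr
    have hanti : Antitone (fun n : ℕ => {x | l x < -(3 ^ n * r)}) := by
      intro n m hnm x hx
      simp only [Set.mem_ofPred_eq] at *
      have : (3 : ℝ) ^ n * r ≤ 3 ^ m * r := by
        gcongr; norm_num
      linarith
    have hlim := tendsto_measure_iInter_atTop (μ := P)
      (s := fun n : ℕ => {x | l x < -(3 ^ n * r)})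
      (fun n => (measurableSet_lt hl.measurable measurable_const).nullMeasurableSet) hanti
      ⟨0, measure_ne_top _ _⟩
    have he : ⋂ n : ℕ, {x | l x < -(3 ^ n * r)} = ∅ := by
      ext x
      simp only [Set.mem_iInter, Set.mem_ofPred_eq, Set.mem_empty_iff_false, iff_false, not_forall,
        not_lt]
      obtain ⟨n, hn⟩ := pow_unbounded_of_one_lt (-(l x) / r) (show (1 : ℝ) < 3 by norm_num)
      rw [div_lt_iff₀ hr] at hn
      exact ⟨n, by linarith⟩
    rw [he, measure_empty] at hlim
    exact le_antisymm (ge_of_tendsto' hlim (fun n => stepn n r)) bot_le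
  have : ∀ᵐ x ∂P, ∀ n : ℕ, -(1 / ((n : ℝ) + 1)) ≤ l x := by
    rw [ae_all_iff]
    intro n
    rw [ae_iff]
    simpa only [not_le] using zero (1 / ((n : ℝ) + 1)) (by positivity)
  filter_upwards [this] with x hx
  by_contra hc
  push Not at hc
  obtain ⟨n, hn⟩ := exists_nat_one_div_lt (neg_pos.2 hc)
  linarith [hx n]

theorem supp (P : Measure E2) [IsProbabilityMeasure P]
    (hP : P = (3 : ℝ≥0∞)⁻¹ • (P.map S1 + P.map S2 + P.map S3)) :
    ∀ᵐ x ∂P, 0 ≤ x 1 ∧ 0 ≤ √3 * x 0 - x 1 ∧ 0 ≤ √3 - √3 * x 0 - x 1 := by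
  have h3 : 0 ≤ √3 := Real.sqrt_nonneg 3
  filter_upwards [nonneg_ae P hP (fun x => x 1) (by fun_prop) (by simp [S1_1]) (by simp [S2_1])
      (by intro x; simp only [S3_1]; linarith),
    nonneg_ae P hP (fun x => √3 * x 0 - x 1) (by fun_prop)
      (by intro x; simp only [S1_1, S1_0]; linarith) (by intro x; simp only [S2_1, S2_0]; linarith)
      (by intro x; simp only [S3_1, S3_0]; linarith),
    nonneg_ae P hP (fun x => √3 - √3 * x 0 - x 1) (by fun_prop)
      (by intro x; simp only [S1_1, S1_0]; linarith) (by intro x; simp only [S2_1, S2_0]; linarith)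
      (by intro x; simp only [S3_1, S3_0]; linarith)] with x a b c
  exact ⟨a, b, c⟩

theorem cont_int (P : Measure E2) [IsProbabilityMeasure P]
    (hP : P = (3 : ℝ≥0∞)⁻¹ • (P.map S1 + P.map S2 + P.map S3)) (f : E2 → ℝ) (hf : Continuous f) :
    Integrable f P := by
  have hb : ∀ᵐ x ∂P, x ∈ Metric.closedBall (0 : E2) 4 := by
    filter_upwards [supp P hP] with x ⟨h1, h2, h3⟩
    have s0 : 0 < √3 := by positivity
    have s2 : √3 ^ 2 = 3 := Real.sq_sqrt (by norm_num)
    have s1 : √3 ≤ 2 := by nlinarith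
    have a0 : 0 ≤ x 0 := by
      by_contra hc; push Not at hc; have := mul_neg_of_pos_of_neg s0 hc; linarith
    have a1 : x 0 ≤ 1 := by
      by_contra hc; push Not at hc; have := mul_lt_mul_of_pos_left hc s0; linarith
    have a2 : x 1 ≤ 2 := by
      have := mul_nonneg s0.le a0; linarith
    rw [mem_closedBall_zero_iff]
    have := nsq x
    nlinarith [norm_nonneg x]
  have e : P.restrict (Metric.closedBall (0 : E2) 4) = P := Measure.restrict_eq_self_of_ae_mem hb
  have := hf.continuousOn.integrableOn_compact (μ := P) (isCompact_closedBall (0 : E2) 4)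
  rwa [IntegrableOn, e] at this

theorem self_int (P : Measure E2) [IsProbabilityMeasure P]
    (hP : P = (3 : ℝ≥0∞)⁻¹ • (P.map S1 + P.map S2 + P.map S3)) (f : E2 → ℝ) (hf : Continuous f) :
    ∫ x, f x ∂P = (∫ x, f (S1 x) ∂P + ∫ x, f (S2 x) ∂P + ∫ x, f (S3 x) ∂P) / 3 := by
  have i1 : Integrable f (P.map S1) :=
    (integrable_map_measure hf.aestronglyMeasurable S1_c.measurable.aemeasurable).2
      (cont_int P hP _ (hf.comp S1_c))
  have i2 : Integrable f (P.map S2) :=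
    (integrable_map_measure hf.aestronglyMeasurable S2_c.measurable.aemeasurable).2
      (cont_int P hP _ (hf.comp S2_c))
  have i3 : Integrable f (P.map S3) :=
    (integrable_map_measure hf.aestronglyMeasurable S3_c.measurable.aemeasurable).2
      (cont_int P hP _ (hf.comp S3_c))
  conv_lhs => rw [hP]
  rw [integral_smul_measure, integral_add_measure (i1.add_measure i2) i3,
    integral_add_measure i1 i2,
    integral_map S1_c.measurable.aemeasurable hf.aestronglyMeasurable,
    integral_map S2_c.measurable.aemeasurable hf.aestronglyMeasurable,
    integral_map S3_c.measurable.aemeasurable hf.aestronglyMeasurable]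
  simp
  ring

/-- centred coordinates -/
def X0 (x : E2) : ℝ := x 0 - 1 / 2
def X1 (x : E2) : ℝ := x 1 - √3 / 6
theorem X0_c : Continuous X0 := by unfold X0; fun_prop
theorem X1_c : Continuous X1 := by unfold X1; fun_prop
theorem X0_S1 (x : E2) : X0 (S1 x) = X0 x / 3 - 1 / 3 := by simp only [X0, S1_0]; ring
theorem X0_S2 (x : E2) : X0 (S2 x) = X0 x / 3 + 1 / 3 := by simp only [X0, S2_0]; ring
theorem X0_S3 (x : E2) : X0 (S3 x) = X0 x / 3 := by simp only [X0, S3_0]; ring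
theorem X1_S1 (x : E2) : X1 (S1 x) = X1 x / 3 - √3 / 9 := by simp only [X1, S1_1]; ring
theorem X1_S2 (x : E2) : X1 (S2 x) = X1 x / 3 - √3 / 9 := by simp only [X1, S2_1]; ring
theorem X1_S3 (x : E2) : X1 (S3 x) = X1 x / 3 + 2 * √3 / 9 := by simp only [X1, S3_1]; ring

/-- integral of a quadratic polynomial in the centred coordinates, in terms of moments -/
theorem quad_int (P : Measure E2) [IsProbabilityMeasure P]
    (hP : P = (3 : ℝ≥0∞)⁻¹ • (P.map S1 + P.map S2 + P.map S3)) (a b c d e f : ℝ) :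
    ∫ x, (a * X0 x ^ 2 + b * X1 x ^ 2 + c * (X0 x * X1 x) + d * X0 x + e * X1 x + f) ∂P
      = a * ∫ x, X0 x ^ 2 ∂P + b * ∫ x, X1 x ^ 2 ∂P + c * ∫ x, X0 x * X1 x ∂P
        + d * ∫ x, X0 x ∂P + e * ∫ x, X1 x ∂P + f := by
  have c0 := X0_c
  have c1 := X1_c
  rw [integral_add (cont_int P hP _ (by fun_prop)) (cont_int P hP _ (by fun_prop)),
    integral_add (cont_int P hP _ (by fun_prop)) (cont_int P hP _ (by fun_prop)),
    integral_add (cont_int P hP _ (by fun_prop)) (cont_int P hP _ (by fun_prop)),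
    integral_add (cont_int P hP _ (by fun_prop)) (cont_int P hP _ (by fun_prop)),
    integral_add (cont_int P hP _ (by fun_prop)) (cont_int P hP _ (by fun_prop)),
    integral_const_mul, integral_const_mul, integral_const_mul, integral_const_mul,
    integral_const_mul]
  simp

theorem moments (P : Measure E2) [IsProbabilityMeasure P]
    (hP : P = (3 : ℝ≥0∞)⁻¹ • (P.map S1 + P.map S2 + P.map S3)) :
    ∫ x, X0 x ∂P = 0 ∧ ∫ x, X1 x ∂P = 0 ∧ ∫ x, X0 x ^ 2 ∂P = 1 / 12 ∧
      ∫ x, X1 x ^ 2 ∂P = 1 / 12 ∧ ∫ x, X0 x * X1 x ∂P = 0 := by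
  have c0 := X0_c
  have c1 := X1_c
  have s2 : √3 ^ 2 = 3 := Real.sq_sqrt (by norm_num)
  have Q := quad_int P hP
  have sub : ∀ (g : E2 → ℝ) (a b c d e f : ℝ),
      (∀ x, g x = a * X0 x ^ 2 + b * X1 x ^ 2 + c * (X0 x * X1 x) + d * X0 x + e * X1 x + f) →
      ∫ x, g x ∂P = a * ∫ x, X0 x ^ 2 ∂P + b * ∫ x, X1 x ^ 2 ∂P + c * ∫ x, X0 x * X1 x ∂P
        + d * ∫ x, X0 x ∂P + e * ∫ x, X1 x ∂P + f := by
    intro g a b c d e f h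
    rw [← Q]; exact integral_congr_ae (Filter.Eventually.of_forall h)
  have m0 : ∫ x, X0 x ∂P = 0 := by
    have h := self_int P hP X0 c0
    rw [sub (fun x => X0 (S1 x)) 0 0 0 (1/3) 0 (-1/3) (by intro x; simp only [X0_S1]; ring),
      sub (fun x => X0 (S2 x)) 0 0 0 (1/3) 0 (1/3) (by intro x; simp only [X0_S2]; ring),
      sub (fun x => X0 (S3 x)) 0 0 0 (1/3) 0 0 (by intro x; simp only [X0_S3]; ring)] at h
    linarith
  have m1 : ∫ x, X1 x ∂P = 0 := by
    have h := self_int P hP X1 c1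
    rw [sub (fun x => X1 (S1 x)) 0 0 0 0 (1/3) (-√3/9) (by intro x; simp only [X1_S1]; ring),
      sub (fun x => X1 (S2 x)) 0 0 0 0 (1/3) (-√3/9) (by intro x; simp only [X1_S2]; ring),
      sub (fun x => X1 (S3 x)) 0 0 0 0 (1/3) (2*√3/9) (by intro x; simp only [X1_S3]; ring)] at h
    linarith
  refine ⟨m0, m1, ?_, ?_, ?_⟩
  · have h := self_int P hP (fun x => X0 x ^ 2) (by fun_prop)
    rw [sub (fun x => X0 (S1 x) ^ 2) (1/9) 0 0 (-2/9) 0 (1/9) (by intro x; simp only [X0_S1]; ring),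
      sub (fun x => X0 (S2 x) ^ 2) (1/9) 0 0 (2/9) 0 (1/9) (by intro x; simp only [X0_S2]; ring),
      sub (fun x => X0 (S3 x) ^ 2) (1/9) 0 0 0 0 0 (by intro x; simp only [X0_S3]; ring)] at h
    linarith
  · have h := self_int P hP (fun x => X1 x ^ 2) (by fun_prop)
    rw [sub (fun x => X1 (S1 x) ^ 2) 0 (1/9) 0 0 (-2*√3/27) (√3^2/81)
        (by intro x; simp only [X1_S1]; ring),
      sub (fun x => X1 (S2 x) ^ 2) 0 (1/9) 0 0 (-2*√3/27) (√3^2/81)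
        (by intro x; simp only [X1_S2]; ring),
      sub (fun x => X1 (S3 x) ^ 2) 0 (1/9) 0 0 (4*√3/27) (4*√3^2/81)
        (by intro x; simp only [X1_S3]; ring), m1, s2] at h
    linarith
  · have h := self_int P hP (fun x => X0 x * X1 x) (by fun_prop)
    rw [sub (fun x => X0 (S1 x) * X1 (S1 x)) 0 0 (1/9) (-√3/27) (-1/9) (√3/27)
        (by intro x; simp only [X1_S1, X0_S1]; ring),
      sub (fun x => X0 (S2 x) * X1 (S2 x)) 0 0 (1/9) (-√3/27) (1/9) (-√3/27)
        (by intro x; simp only [X1_S2, X0_S2]; ring),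
      sub (fun x => X0 (S3 x) * X1 (S3 x)) 0 0 (1/9) (2*√3/27) 0 0
        (by intro x; simp only [X1_S3, X0_S3]; ring), m0, m1] at h
    linarith

theorem quad_int' (P : Measure E2) [IsProbabilityMeasure P]
    (hP : P = (3 : ℝ≥0∞)⁻¹ • (P.map S1 + P.map S2 + P.map S3)) (g : E2 → ℝ) (a b c d e f : ℝ)
    (h : ∀ x, g x = a * X0 x ^ 2 + b * X1 x ^ 2 + c * (X0 x * X1 x) + d * X0 x + e * X1 x + f) :
    ∫ x, g x ∂P = (a + b) / 12 + f := by
  obtain ⟨h1, h2, h3, h4, h5⟩ := moments P hP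
  rw [integral_congr_ae (Filter.Eventually.of_forall h), quad_int P hP, h1, h2, h3, h4, h5]
  ring

/-- the one-dimensional inequality -/
theorem proj_bound (P : Measure E2) [IsProbabilityMeasure P]
    (hP : P = (3 : ℝ≥0∞)⁻¹ • (P.map S1 + P.map S2 + P.map S3)) (u v s : ℝ)
    (huv : u ^ 2 + v ^ 2 = 1) :
    (∫ x, |u * X0 x + v * X1 x - s| ∂P) ^ 2 ≤ s ^ 2 + 2 / 27 := by
  have c0 := X0_c
  have c1 := X1_c
  have s0 : 0 < √3 := by positivity
  have s2 : √3 ^ 2 = 3 := Real.sq_sqrt (by norm_num)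
  have key := mid2 P (fun x => u * X0 x + v * X1 x) (cont_int P hP _ (by fun_prop))
    (by rw [quad_int' P hP _ 0 0 0 u v 0 (by intro x; ring)]; norm_num)
    (by
      have h1 : ∫ x, |u * X0 x + v * X1 x| ∂P ≤
          ∫ x, ((u * X0 x + v * X1 x) ^ 2 + (2887 / 10000) ^ 2) / (2 * (2887 / 10000)) ∂P := by
        apply integral_mono (cont_int P hP _ (by fun_prop)) (cont_int P hP _ (by fun_prop))
        intro x
        simp only
        rw [le_div_iff₀ (by norm_num), ← sq_abs (u * X0 x + v * X1 x)]
        nlinarith only [sq_nonneg (|u * X0 x + v * X1 x| - 2887 / 10000)]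
      replace h1 := h1.trans_eq (quad_int' P hP _ (u ^ 2 / (2 * (2887 / 10000))) (v ^ 2 / (2 * (2887 / 10000)))
        (2 * u * v / (2 * (2887 / 10000))) 0 0 ((2887 / 10000) / 2) (by intro x; ring))
      have : (u ^ 2 / (2 * (2887 / 10000)) + v ^ 2 / (2 * (2887 / 10000))) =
        1 / (2 * (2887 / 10000)) := by rw [← huv]; ring
      rw [this] at h1
      norm_num at h1
      linarith)
    (-u / 3 - v * √3 / 9) (u / 3 - v * √3 / 9) (2 * v * √3 / 9) s (by ring)
    (by linear_combination (2 / 9) * huv + (2 / 27 * v ^ 2) * s2)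
    (by
      intro L U a1 a2 a3 a4 a5 a6
      filter_upwards [supp P hP] with x ⟨h1, h2, h3⟩
      -- barycentric coordinates times √3
      have e : √3 * (u * X0 x + v * X1 x) = 3 / 2 * ((√3 - √3 * x 0 - x 1) * (-u / 3 - v * √3 / 9)
          + (√3 * x 0 - x 1) * (u / 3 - v * √3 / 9) + 2 * x 1 * (2 * v * √3 / 9)) := by
        simp only [X0, X1]
        linear_combination 0 * s2
      have L1 := mul_le_mul_of_nonneg_left a1 h3
      have L2 := mul_le_mul_of_nonneg_left a2 h2
      have L3 := mul_le_mul_of_nonneg_left a3 h1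
      have U1 := mul_le_mul_of_nonneg_left a4 h3
      have U2 := mul_le_mul_of_nonneg_left a5 h2
      have U3 := mul_le_mul_of_nonneg_left a6 h1
      constructor
      · refine le_of_mul_le_mul_left ?_ s0
        rw [e]; linarith
      · refine le_of_mul_le_mul_left ?_ s0
        rw [e]; linarith)
  have hs := self_int P hP (fun x => |u * X0 x + v * X1 x - s|) (by fun_prop)
  have g1 : ∫ x, |u * X0 (S1 x) + v * X1 (S1 x) - s| ∂P =
      (∫ x, |u * X0 x + v * X1 x - 3 * (s - (-u / 3 - v * √3 / 9))| ∂P) / 3 := by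
    rw [← integral_div]
    congr 1; ext x
    rw [X0_S1, X1_S1, ← abs_of_pos (show (0 : ℝ) < 3 by norm_num), ← abs_div,
      abs_of_pos (show (0 : ℝ) < 3 by norm_num)]
    congr 1; ring
  have g2 : ∫ x, |u * X0 (S2 x) + v * X1 (S2 x) - s| ∂P =
      (∫ x, |u * X0 x + v * X1 x - 3 * (s - (u / 3 - v * √3 / 9))| ∂P) / 3 := by
    rw [← integral_div]
    congr 1; ext x
    rw [X0_S2, X1_S2, ← abs_of_pos (show (0 : ℝ) < 3 by norm_num), ← abs_div,
      abs_of_pos (show (0 : ℝ) < 3 by norm_num)]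
    congr 1; ring
  have g3 : ∫ x, |u * X0 (S3 x) + v * X1 (S3 x) - s| ∂P =
      (∫ x, |u * X0 x + v * X1 x - 3 * (s - 2 * v * √3 / 9)| ∂P) / 3 := by
    rw [← integral_div]
    congr 1; ext x
    rw [X0_S3, X1_S3, ← abs_of_pos (show (0 : ℝ) < 3 by norm_num), ← abs_div,
      abs_of_pos (show (0 : ℝ) < 3 by norm_num)]
    congr 1; ring
  rw [hs, g1, g2, g3]
  nlinarith only [key]

theorem dist_sq (x a : E2) : ‖x - a‖ ^ 2 = (X0 x - X0 a) ^ 2 + (X1 x - X1 a) ^ 2 := by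
  rw [nsq]; simp [X0, X1]

theorem lower (P : Measure E2) [IsProbabilityMeasure P]
    (hP : P = (3 : ℝ≥0∞)⁻¹ • (P.map S1 + P.map S2 + P.map S3)) (a b : E2) :
    5 / 54 ≤ ∫ x, min (‖x - a‖ ^ 2) (‖x - b‖ ^ 2) ∂P := by
  have c0 := X0_c
  have c1 := X1_c
  obtain ⟨p, hp⟩ : ∃ p, p = (X0 a + X0 b) / 2 := ⟨_, rfl⟩
  obtain ⟨q, hq⟩ : ∃ q, q = (X1 a + X1 b) / 2 := ⟨_, rfl⟩
  obtain ⟨d, hd⟩ : ∃ d, d = (X0 a - X0 b) / 2 := ⟨_, rfl⟩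
  obtain ⟨e, he⟩ : ∃ e, e = (X1 a - X1 b) / 2 := ⟨_, rfl⟩
  have a0 : X0 a = p + d := by linarith
  have b0 : X0 b = p - d := by linarith
  have a1 : X1 a = q + e := by linarith
  have b1 : X1 b = q - e := by linarith
  have hm : ∀ x, min (‖x - a‖ ^ 2) (‖x - b‖ ^ 2) =
      ((X0 x - p) ^ 2 + (X1 x - q) ^ 2 + d ^ 2 + e ^ 2)
        - 2 * |d * X0 x + e * X1 x - (p * d + q * e)| := by
    intro x
    rw [dist_sq, dist_sq, a0, b0, a1, b1]
    rcases abs_cases (d * X0 x + e * X1 x - (p * d + q * e)) with ⟨h, h'⟩ | ⟨h, h'⟩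
    · rw [h, min_eq_left (by linarith)]; ring
    · rw [h, min_eq_right (by linarith)]; ring
  rw [integral_congr_ae (Filter.Eventually.of_forall hm),
    integral_sub (cont_int P hP _ (by fun_prop)) (cont_int P hP _ (by fun_prop)),
    integral_const_mul,
    quad_int' P hP _ 1 1 0 (-2 * p) (-2 * q) (p ^ 2 + q ^ 2 + d ^ 2 + e ^ 2) (by intro x; ring)]
  rcases eq_or_ne (d ^ 2 + e ^ 2) 0 with h | h
  · have hd0 : d = 0 := by nlinarith
    have he0 : e = 0 := by nlinarith
    simp only [hd0, he0]
    simp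
    nlinarith
  · obtain ⟨r, hr⟩ : ∃ r, r = √(d ^ 2 + e ^ 2) := ⟨_, rfl⟩
    have hpos : 0 < d ^ 2 + e ^ 2 := lt_of_le_of_ne (by positivity) h.symm
    have r0 : 0 < r := by rw [hr]; positivity
    have r2 : r ^ 2 = d ^ 2 + e ^ 2 := by rw [hr, Real.sq_sqrt hpos.le]
    obtain ⟨u, hu⟩ : ∃ u, d = r * u := ⟨d / r, by field_simp⟩
    obtain ⟨v, hv⟩ : ∃ v, e = r * v := ⟨e / r, by field_simp⟩
    have huv : u ^ 2 + v ^ 2 = 1 := by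
      rw [hu, hv] at r2
      have : r ^ 2 * (u ^ 2 + v ^ 2) = r ^ 2 * 1 := by linarith
      exact mul_left_cancel₀ (by positivity) this
    have hb := proj_bound P hP u v (p * u + q * v) huv
    have hI : ∫ x, |d * X0 x + e * X1 x - (p * d + q * e)| ∂P =
        r * ∫ x, |u * X0 x + v * X1 x - (p * u + q * v)| ∂P := by
      rw [← integral_const_mul]
      congr 1; ext x
      have : d * X0 x + e * X1 x - (p * d + q * e) = r * (u * X0 x + v * X1 x - (p * u + q * v)) := by
        rw [hu, hv]; ring
      rw [this, abs_mul, abs_of_pos r0]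
    rw [hI]
    obtain ⟨g, hg⟩ : ∃ g, g = ∫ x, |u * X0 x + v * X1 x - (p * u + q * v)| ∂P := ⟨_, rfl⟩
    rw [← hg] at hb ⊢
    have hc : (p * u + q * v) ^ 2 ≤ p ^ 2 + q ^ 2 := by
      have : (p ^ 2 + q ^ 2) * 1 = (p * u + q * v) ^ 2 + (p * v - q * u) ^ 2 := by
        rw [← huv]; ring
      nlinarith only [this, sq_nonneg (p * v - q * u)]
    nlinarith only [sq_nonneg (r - g), hc, hb, r2]

theorem err_pair (P : Measure E2) [IsProbabilityMeasure P]
    (hP : P = (3 : ℝ≥0∞)⁻¹ • (P.map S1 + P.map S2 + P.map S3)) (a b : E2) :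
    err P {a, b} = ENNReal.ofReal (∫ x, min (‖x - a‖ ^ 2) (‖x - b‖ ^ 2) ∂P) := by
  unfold err
  rw [ofReal_integral_eq_lintegral_ofReal (cont_int P hP _ (by fun_prop))
    (Filter.Eventually.of_forall fun x => by simp only [Pi.zero_apply]; positivity)]
  congr 1; ext x
  rw [iInf_pair, ENNReal.ofReal_min]

theorem upper (P : Measure E2) [IsProbabilityMeasure P]
    (hP : P = (3 : ℝ≥0∞)⁻¹ • (P.map S1 + P.map S2 + P.map S3)) :
    ∫ x, min (‖x - pt (1/2) (7 / (6 * √3))‖ ^ 2) (‖x - pt (1/2) (1 / (6 * √3))‖ ^ 2) ∂P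
      ≤ 5 / 54 := by
  have s0 : 0 < √3 := by positivity
  have s2 : √3 ^ 2 = 3 := Real.sq_sqrt (by norm_num)
  have c1 := S1_c
  have c2 := S2_c
  have c3 := S3_c
  have ea : 7 / (6 * √3) = 7 * √3 / 18 := by
    field_simp; linarith
  have eb : 1 / (6 * √3) = √3 / 18 := by
    field_simp; linarith
  rw [ea, eb]
  rw [self_int P hP _ (by fun_prop)]
  have g1 : ∫ x, min (‖S1 x - pt (1/2) (7 * √3 / 18)‖ ^ 2) (‖S1 x - pt (1/2) (√3 / 18)‖ ^ 2) ∂P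
      ≤ ∫ x, ‖S1 x - pt (1/2) (√3 / 18)‖ ^ 2 ∂P :=
    integral_mono (cont_int P hP _ (by fun_prop)) (cont_int P hP _ (by fun_prop))
      (fun x => min_le_right _ _)
  have g2 : ∫ x, min (‖S2 x - pt (1/2) (7 * √3 / 18)‖ ^ 2) (‖S2 x - pt (1/2) (√3 / 18)‖ ^ 2) ∂P
      ≤ ∫ x, ‖S2 x - pt (1/2) (√3 / 18)‖ ^ 2 ∂P :=
    integral_mono (cont_int P hP _ (by fun_prop)) (cont_int P hP _ (by fun_prop))
      (fun x => min_le_right _ _)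
  have g3 : ∫ x, min (‖S3 x - pt (1/2) (7 * √3 / 18)‖ ^ 2) (‖S3 x - pt (1/2) (√3 / 18)‖ ^ 2) ∂P
      ≤ ∫ x, ‖S3 x - pt (1/2) (7 * √3 / 18)‖ ^ 2 ∂P :=
    integral_mono (cont_int P hP _ (by fun_prop)) (cont_int P hP _ (by fun_prop))
      (fun x => min_le_left _ _)
  have p0 : ∀ t, X0 (pt (1/2) t) = 0 := by intro t; simp [X0, pt0]
  have p1 : ∀ t, X1 (pt (1/2) t) = t - √3 / 6 := by intro t; simp [X1, pt1]
  replace g1 := g1.trans_eq (quad_int' P hP _ (1/9) (1/9) 0 (-2/9) 0 (1/9)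
    (by intro x; rw [dist_sq, X0_S1, X1_S1, p0, p1]; ring))
  replace g2 := g2.trans_eq (quad_int' P hP _ (1/9) (1/9) 0 (2/9) 0 (1/9)
    (by intro x; rw [dist_sq, X0_S2, X1_S2, p0, p1]; ring))
  replace g3 := g3.trans_eq (quad_int' P hP _ (1/9) (1/9) 0 0 0 0
    (by intro x; rw [dist_sq, X0_S3, X1_S3, p0, p1]; ring))
  linarith

theorem err_lower (P : Measure E2) [IsProbabilityMeasure P]
    (hP : P = (3 : ℝ≥0∞)⁻¹ • (P.map S1 + P.map S2 + P.map S3)) (α : Set E2)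
    (hf : α.Finite) (hc : α.ncard ≤ 2) : ENNReal.ofReal (5 / 54) ≤ err P α := by
  have hsub : ∃ a b, α ⊆ {a, b} := by
    have : α.ncard = 0 ∨ α.ncard = 1 ∨ α.ncard = 2 := by omega
    rcases this with h | h | h
    · rw [Set.ncard_eq_zero hf] at h
      exact ⟨0, 0, by simp [h]⟩
    · obtain ⟨a, rfl⟩ := Set.ncard_eq_one.1 h
      exact ⟨a, a, by simp⟩
    · obtain ⟨a, b, -, rfl⟩ := Set.ncard_eq_two.1 h
      exact ⟨a, b, le_rfl⟩
  obtain ⟨a, b, hab⟩ := hsub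
  calc ENNReal.ofReal (5 / 54) ≤ err P {a, b} := by
        rw [err_pair P hP]; exact ENNReal.ofReal_le_ofReal (lower P hP a b)
    _ ≤ err P α := lintegral_mono fun x => biInf_mono hab

/-- The set {(1/2, 7/(6√3)), (1/2, 1/(6√3))} is an optimal set of two-means for the
R-measure P, with quantization error V₂(P) = 5/54. -/
theorem stmt_4 (P : Measure E2) [IsProbabilityMeasure P]
    (hP : P = (3 : ℝ≥0∞)⁻¹ • (P.map S1 + P.map S2 + P.map S3)) :
    IsOptimal P 2 {pt (1/2) (7 / (6 * Real.sqrt 3)), pt (1/2) (1 / (6 * Real.sqrt 3))}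
      ∧ quantErr P 2 = 5 / 54 := by
  have hE : err P {pt (1/2) (7 / (6 * Real.sqrt 3)), pt (1/2) (1 / (6 * Real.sqrt 3))}
      = ENNReal.ofReal (5 / 54) := by
    rw [err_pair P hP]
    exact congrArg _ (le_antisymm (upper P hP) (lower P hP _ _))
  have hfin : ({pt (1/2) (7 / (6 * Real.sqrt 3)), pt (1/2) (1 / (6 * Real.sqrt 3))} :
      Set E2).Finite := Set.toFinite _
  have hcard : ({pt (1/2) (7 / (6 * Real.sqrt 3)), pt (1/2) (1 / (6 * Real.sqrt 3))} :
      Set E2).ncard ≤ 2 := Set.ncard_insert_le _ _ |>.trans (by simp)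
  have hQ : quantErr P 2 = ENNReal.ofReal (5 / 54) := by
    apply le_antisymm
    · rw [← hE]
      exact iInf₂_le _ ⟨hfin, hcard⟩
    · exact le_iInf₂ fun α h => err_lower P hP α h.1 h.2
  refine ⟨⟨hfin, hcard, by rw [hE, hQ]⟩, ?_⟩
  rw [hQ, ENNReal.ofReal_div_of_pos (by norm_num)]
  norm_num

end
end

section
/- Let P be the R-measure and let α be an optimal set of n-means for P with n ≥ 3. Then α ∩ △_i ≠ ∅ for every i ∈ {1, 2, 3}, where △_i = S_i(△) and △ is the closed triangle with vertices (0,0), (1,0), (1/2, √3/2) (the convex hull of these three points). -/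
open MeasureTheory ENNReal

noncomputable section

namespace RM

/-- Barycentric coordinates with respect to the vertices of the triangle. -/
noncomputable def lam (i : Fin 3) (x : E2) : ℝ :=
  ![1 - x 0 - x 1 / Real.sqrt 3, x 0 - x 1 / Real.sqrt 3, 2 * x 1 / Real.sqrt 3] i

/-- Point with given barycentric coordinates (of total one). -/
noncomputable def bp (b c : ℝ) : E2 := pt (b + c / 2) (Real.sqrt 3 / 2 * c)

lemma pt_zero (a b : ℝ) : (pt a b) 0 = a := by simp [pt]
lemma pt_one (a b : ℝ) : (pt a b) 1 = b := by simp [pt]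

lemma s3 : Real.sqrt 3 * Real.sqrt 3 = 3 := Real.mul_self_sqrt (by norm_num)
lemma s3pos : 0 < Real.sqrt 3 := by positivity

lemma lam_bp0 (b c : ℝ) : lam 0 (bp b c) = 1 - b - c := by
  have := s3pos
  simp [lam, bp, pt_zero, pt_one]; field_simp; ring
lemma lam_bp1 (b c : ℝ) : lam 1 (bp b c) = b := by
  have := s3pos
  simp [lam, bp, pt_zero, pt_one]; field_simp; ring
lemma lam_bp2 (b c : ℝ) : lam 2 (bp b c) = c := by
  have := s3pos
  simp [lam, bp, pt_zero, pt_one]; field_simp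

lemma lam_sum (x : E2) : lam 0 x + lam 1 x + lam 2 x = 1 := by
  simp [lam]; ring

lemma lam_sum' (i : Fin 3) (x : E2) : lam i x + lam (i+1) x + lam (i+2) x = 1 := by
  have := lam_sum x
  fin_cases i <;> simp <;> linarith

lemma lam_S (i j : Fin 3) (x : E2) :
    lam j (Smap i x) = (lam j x + if j = i then 2 else 0) / 3 := by
  have h := s3pos
  have h3 := s3
  fin_cases i <;> fin_cases j <;>
    simp [lam, Smap, S1, S2, S3, pt_zero, pt_one] <;> field_simp <;> (try ring_nf)

lemma lam_S_same (i : Fin 3) (x : E2) : lam i (Smap i x) = (lam i x + 2) / 3 := by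
  simp [lam_S]
lemma lam_S_ne {i j : Fin 3} (h : j ≠ i) (x : E2) : lam j (Smap i x) = lam j x / 3 := by
  simp [lam_S, h]

lemma normsq (x y : E2) : ‖x - y‖ ^ 2 =
    ((lam 0 x - lam 0 y) ^ 2 + (lam 1 x - lam 1 y) ^ 2 + (lam 2 x - lam 2 y) ^ 2) / 2 := by
  have h := s3pos
  have h3 : Real.sqrt 3 ^ 2 = 3 := by rw [sq]; exact s3
  rw [EuclideanSpace.norm_sq_eq]
  simp [lam, Fin.sum_univ_two]
  field_simp
  ring_nf
  rw [h3]; ring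

lemma normsq' (i : Fin 3) (x y : E2) : ‖x - y‖ ^ 2 =
    ((lam i x - lam i y) ^ 2 + (lam (i+1) x - lam (i+1) y) ^ 2
      + (lam (i+2) x - lam (i+2) y) ^ 2) / 2 := by
  have := normsq x y
  fin_cases i <;> simp <;> linarith

@[fun_prop]
lemma lam_cont (i : Fin 3) : Continuous (lam i) := by
  have h0 : Continuous fun x : E2 => x 0 := by fun_prop
  have h1 : Continuous fun x : E2 => x 1 := by fun_prop
  fin_cases i
  · exact (continuous_const.sub h0).sub (h1.div_const _)
  · exact h0.sub (h1.div_const _)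
  · exact (continuous_const.mul h1).div_const _

lemma eq_of_lam {x y : E2} (h : ∀ i, lam i x = lam i y) : x = y := by
  have := normsq x y
  rw [h 0, h 1, h 2] at this
  have h2 : ‖x - y‖ = 0 := by
    have : ‖x - y‖ ^ 2 = 0 := by rw [this]; ring
    exact pow_eq_zero_iff (two_ne_zero) |>.1 this
  exact sub_eq_zero.1 (norm_eq_zero.1 h2)

lemma lam_affine (i : Fin 3) (a b : ℝ) (hab : a + b = 1) (x y : E2) :
    lam i (a • x + b • y) = a * lam i x + b * lam i y := by
  have : b = 1 - a := by linarith
  subst this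
  have h := s3pos
  fin_cases i <;> simp [lam] <;> field_simp <;> ring

lemma mem_Tri (x : E2) : x ∈ Tri ↔ ∀ i, 0 ≤ lam i x := by
  have v0 : pt 0 0 = bp 0 0 := by simp [bp]
  have v1 : pt 1 0 = bp 1 0 := by simp [bp]
  have v2 : pt (1/2) (Real.sqrt 3 / 2) = bp 0 1 := by simp [bp]
  constructor
  · intro hx
    have hc : Convex ℝ {x : E2 | ∀ i, 0 ≤ lam i x} := by
      intro x hx y hy a b ha hb hab i
      rw [lam_affine i a b hab]
      have := hx i; have := hy i
      positivity
    refine convexHull_min ?_ hc hx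
    rintro z (rfl | rfl | rfl) i
    · rw [v0]; fin_cases i <;> simp [lam_bp0, lam_bp1, lam_bp2]
    · rw [v1]; fin_cases i <;> simp [lam_bp0, lam_bp1, lam_bp2]
    · rw [v2]; fin_cases i <;> simp [lam_bp0, lam_bp1, lam_bp2]
  · intro h
    have hs := lam_sum x
    have hx : x = lam 0 x • pt 0 0 + lam 1 x • pt 1 0 + lam 2 x • pt (1/2) (Real.sqrt 3 / 2) := by
      have h := s3pos
      ext i
      fin_cases i <;> simp [lam, pt_zero, pt_one] <;> field_simp <;> ring
    rw [hx]
    have hcv := convex_convexHull ℝ ({pt 0 0, pt 1 0, pt (1/2) (Real.sqrt 3 / 2)} : Set E2)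
    have := hcv.sum_mem (t := Finset.univ) (w := fun i => lam i x)
      (z := ![pt 0 0, pt 1 0, pt (1/2) (Real.sqrt 3 / 2)]) (fun i _ => h i)
      (by simp [Fin.sum_univ_three, hs])
      (by intro i _; apply subset_convexHull; fin_cases i <;> simp)
    simpa [Fin.sum_univ_three, Tri] using this

lemma S_mem {x : E2} (hx : x ∈ Tri) (i : Fin 3) : Smap i x ∈ Tri := by
  rw [mem_Tri] at *
  intro j
  rw [lam_S]
  have := hx j
  split_ifs <;> linarith

lemma mem_image {a : E2} (ha : a ∈ Tri) (i : Fin 3) (h : 2/3 ≤ lam i a) :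
    a ∈ Smap i '' Tri := by
  rw [mem_Tri] at ha
  have hs := lam_sum a
  obtain ⟨x, hx⟩ : ∃ x : E2, ∀ j, lam j x = 3 * lam j a - if j = i then 2 else 0 := by
    refine ⟨bp (3 * lam 1 a - if 1 = i then 2 else 0) (3 * lam 2 a - if 2 = i then 2 else 0), ?_⟩
    intro j
    fin_cases i <;> fin_cases j <;> simp [lam_bp0, lam_bp1, lam_bp2] <;> linarith
  refine ⟨x, ?_, ?_⟩
  · rw [mem_Tri]; intro j; rw [hx]
    have := ha j
    split_ifs with hj
    · subst hj; linarith
    · linarith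
  · apply eq_of_lam; intro j; rw [lam_S, hx]; ring

@[fun_prop]
lemma Smap_cont (i : Fin 3) : Continuous (Smap i) := by
  fin_cases i
  · change Continuous fun x : E2 => (3 : ℝ)⁻¹ • x
    fun_prop
  · change Continuous fun x : E2 => (3 : ℝ)⁻¹ • x + pt (2/3) 0
    fun_prop
  · change Continuous fun x : E2 => (3 : ℝ)⁻¹ • x + pt (1/3) (Real.sqrt 3 / 3)
    fun_prop

lemma Tri_compact : IsCompact Tri := by
  apply Set.Finite.isCompact_convexHull
  exact Set.toFinite _

lemma norm_S (i : Fin 3) (x y : E2) : ‖Smap i x - Smap i y‖ ^ 2 = ‖x - y‖ ^ 2 / 9 := by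
  rw [normsq, normsq]
  simp only [lam_S]; ring

section meas
variable {P : Measure E2} [IsProbabilityMeasure P]

lemma lint_self (hP : P = (3 : ℝ≥0∞)⁻¹ • (P.map S1 + P.map S2 + P.map S3))
    {s : Set E2} (hs : MeasurableSet s) :
    P s = (3 : ℝ≥0∞)⁻¹ * (P (Smap 0 ⁻¹' s) + P (Smap 1 ⁻¹' s) + P (Smap 2 ⁻¹' s)) := by
  conv_lhs => rw [hP]
  have m0 := (Smap_cont 0).measurable
  have m1 := (Smap_cont 1).measurable
  have m2 := (Smap_cont 2).measurable
  simp only [Measure.smul_apply, Measure.add_apply, smul_eq_mul]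
  rw [Measure.map_apply (by exact m0) hs, Measure.map_apply (by exact m1) hs,
    Measure.map_apply (by exact m2) hs]
  rfl

lemma ae_Tri (hP : P = (3 : ℝ≥0∞)⁻¹ • (P.map S1 + P.map S2 + P.map S3)) :
    ∀ᵐ x ∂P, x ∈ Tri := by
  have key : ∀ i : Fin 3, ∀ᵐ x ∂P, 0 ≤ lam i x := by
    intro i
    have hm : ∀ t : ℝ, MeasurableSet {x : E2 | lam i x < t} := fun t =>
      measurableSet_lt (lam_cont i).measurable measurable_const
    have step : ∀ t : ℝ, P {x | lam i x < t} ≤ P {x | lam i x < 3 * t} := by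
      intro t
      rw [lint_self hP (hm t)]
      have h1 : ∀ j : Fin 3, P (Smap j ⁻¹' {x | lam i x < t}) ≤ P {x | lam i x < 3 * t} := by
        intro j
        apply measure_mono
        intro x hx
        simp only [Set.mem_preimage, Set.mem_ofPred_eq, lam_S] at hx ⊢
        split_ifs at hx <;> linarith
      calc _ ≤ (3 : ℝ≥0∞)⁻¹ * (P {x | lam i x < 3 * t} + P {x | lam i x < 3 * t}
              + P {x | lam i x < 3 * t}) := by
              refine mul_le_mul_right ?_ _
              exact add_le_add (add_le_add (h1 0) (h1 1)) (h1 2)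
        _ = (3 : ℝ≥0∞)⁻¹ * 3 * P {x | lam i x < 3 * t} := by ring
        _ = _ := by rw [ENNReal.inv_mul_cancel (by norm_num) (by norm_num), one_mul]
    have stepk : ∀ (k : ℕ) (t : ℝ), P {x | lam i x < t} ≤ P {x | lam i x < 3 ^ k * t} := by
      intro k
      induction k with
      | zero => intro t; simp
      | succ k ih =>
        intro t
        refine (step t).trans ((ih (3 * t)).trans (le_of_eq ?_))
        congr 2; ext x; rw [pow_succ, mul_assoc]
    have zero : ∀ t : ℝ, t < 0 → P {x | lam i x < t} = 0 := by
      intro t ht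
      have hlim : Filter.Tendsto (fun k : ℕ => P {x | lam i x < 3 ^ k * t}) Filter.atTop
          (nhds (P (⋂ k : ℕ, {x | lam i x < 3 ^ k * t}))) := by
        apply tendsto_measure_iInter_atTop
        · intro k; exact (hm _).nullMeasurableSet
        · intro k l hkl x hx
          simp only [Set.mem_ofPred_eq] at hx ⊢
          have : (3:ℝ) ^ k ≤ 3 ^ l := pow_le_pow_right₀ (by norm_num) hkl
          nlinarith
        · exact ⟨0, measure_ne_top _ _⟩
      have he : (⋂ k : ℕ, {x : E2 | lam i x < 3 ^ k * t}) = ∅ := by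
        ext x
        simp only [Set.mem_iInter, Set.mem_ofPred_eq, Set.mem_empty_iff_false, iff_false, not_forall,
          not_lt]
        obtain ⟨k, hk⟩ := pow_unbounded_of_one_lt (lam i x / t) (by norm_num : (1:ℝ) < 3)
        refine ⟨k, ?_⟩
        rw [div_lt_iff_of_neg ht] at hk
        exact hk.le
      rw [he, measure_empty] at hlim
      exact le_antisymm (ge_of_tendsto' hlim (fun k => stepk k t)) bot_le
    rw [ae_iff]
    have : {a : E2 | ¬ 0 ≤ lam i a} = ⋃ k : ℕ, {x | lam i x < -(1 / ((k:ℝ) + 1))} := by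
      ext x
      simp only [Set.mem_ofPred_eq, not_le, Set.mem_iUnion]
      constructor
      · intro h
        obtain ⟨k, hk⟩ := exists_nat_one_div_lt (neg_pos.2 h)
        exact ⟨k, by linarith⟩
      · rintro ⟨k, hk⟩
        have : 0 < 1 / ((k:ℝ) + 1) := by positivity
        linarith
    rw [this, measure_iUnion_null_iff]
    intro k
    apply zero
    have : 0 < 1 / ((k:ℝ) + 1) := by positivity
    linarith
  filter_upwards [ae_all_iff.2 key] with x hx
  exact (mem_Tri x).2 hx

lemma integ (hP : P = (3 : ℝ≥0∞)⁻¹ • (P.map S1 + P.map S2 + P.map S3))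
    {f : E2 → ℝ} (hf : Continuous f) : Integrable f P := by
  obtain ⟨C, hC⟩ := Tri_compact.exists_bound_of_continuousOn hf.continuousOn
  apply Integrable.of_bound hf.aestronglyMeasurable C
  filter_upwards [ae_Tri hP] with x hx using hC x hx

lemma iadd (hP : P = (3 : ℝ≥0∞)⁻¹ • (P.map S1 + P.map S2 + P.map S3))
    {f g : E2 → ℝ} (hf : Continuous f) (hg : Continuous g) :
    ∫ x, (f x + g x) ∂P = ∫ x, f x ∂P + ∫ x, g x ∂P :=
  integral_add (integ hP hf) (integ hP hg)

lemma self_int (hP : P = (3 : ℝ≥0∞)⁻¹ • (P.map S1 + P.map S2 + P.map S3))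
    {f : E2 → ℝ} (hf : Continuous f) :
    ∫ x, f x ∂P = (1 / 3) * ∑ i, ∫ x, f (Smap i x) ∂P := by
  have h1 : ∀ i : Fin 3, Integrable f (P.map (Smap i)) := by
    intro i
    rw [integrable_map_measure hf.aestronglyMeasurable (Smap_cont i).aemeasurable]
    exact integ hP (hf.comp (Smap_cont i))
  have h2 : ∀ i : Fin 3, ∫ x, f x ∂(P.map (Smap i)) = ∫ x, f (Smap i x) ∂P := by
    intro i
    exact integral_map (Smap_cont i).aemeasurable hf.aestronglyMeasurable
  have h0 := h1 0; have h1' := h1 1; have h2' := h1 2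
  conv_lhs => rw [hP]
  change ∫ x, f x ∂((3 : ℝ≥0∞)⁻¹ • (P.map (Smap 0) + P.map (Smap 1) + P.map (Smap 2))) = _
  rw [integral_smul_measure, integral_add_measure (h0.add_measure h1') h2',
    integral_add_measure h0 h1', h2, h2, h2, Fin.sum_univ_three]
  simp

lemma mean (hP : P = (3 : ℝ≥0∞)⁻¹ • (P.map S1 + P.map S2 + P.map S3)) (i : Fin 3) :
    ∫ x, lam i x ∂P = 1 / 3 := by
  have h := self_int hP (lam_cont i)
  have hi := integ hP (lam_cont i)
  have : ∀ j, ∫ x, lam i (Smap j x) ∂P = (∫ x, lam i x ∂P + if i = j then 2 else 0) / 3 := by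
    intro j
    simp only [lam_S]
    rw [integral_div, integral_add hi (integrable_const _)]
    simp
  simp only [this, Fin.sum_univ_three] at h
  fin_cases i <;> simp at h ⊢ <;> linarith

lemma second (hP : P = (3 : ℝ≥0∞)⁻¹ • (P.map S1 + P.map S2 + P.map S3)) (i : Fin 3) :
    ∫ x, lam i x ^ 2 ∂P = 2 / 9 := by
  have h := self_int hP (f := fun x => lam i x ^ 2) (by fun_prop)
  have hi := integ hP (lam_cont i)
  have hi2 := integ hP ((lam_cont i).pow 2)
  have hm := mean hP i
  have : ∀ j, ∫ x, lam i (Smap j x) ^ 2 ∂P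
      = (∫ x, lam i x ^ 2 ∂P + if i = j then 16/3 else 0) / 9 := by
    intro j
    by_cases hj : i = j
    · have : ∀ x, lam i (Smap j x) ^ 2 = (lam i x ^ 2 + 4 * lam i x + 4) / 9 := by
        intro x; rw [lam_S, if_pos hj]; ring
      simp only [this]
      rw [integral_div, iadd hP (by fun_prop) (by fun_prop),
        iadd hP (by fun_prop) (by fun_prop), integral_const_mul, hm]
      simp [hj]; ring
    · have : ∀ x, lam i (Smap j x) ^ 2 = (lam i x ^ 2) / 9 := by
        intro x; rw [lam_S, if_neg hj]; ring
      simp only [this]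
      rw [integral_div]
      simp [hj]
  simp only [this, Fin.sum_univ_three] at h
  fin_cases i <;> simp at h ⊢ <;> linarith

lemma quad_int (hP : P = (3 : ℝ≥0∞)⁻¹ • (P.map S1 + P.map S2 + P.map S3)) (i : Fin 3)
    (a b c : ℝ) : ∫ x, (a * lam i x ^ 2 + b * lam i x + c) ∂P = a * (2/9) + b * (1/3) + c := by
  rw [iadd hP (by fun_prop) (by fun_prop), iadd hP (by fun_prop) (by fun_prop), integral_const_mul,
    integral_const_mul, mean hP, second hP]
  simp

lemma dist_int (hP : P = (3 : ℝ≥0∞)⁻¹ • (P.map S1 + P.map S2 + P.map S3)) (p : E2) :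
    ∫ x, ‖x - p‖ ^ 2 ∂P = 1 / 6 + ‖p - bp (1/3) (1/3)‖ ^ 2 := by
  have h : ∀ x, ‖x - p‖ ^ 2 =
     ((1/2) * lam 0 x ^ 2 + (-lam 0 p) * lam 0 x + lam 0 p ^ 2 / 2) +
     ((1/2) * lam 1 x ^ 2 + (-lam 1 p) * lam 1 x + lam 1 p ^ 2 / 2) +
     ((1/2) * lam 2 x ^ 2 + (-lam 2 p) * lam 2 x + lam 2 p ^ 2 / 2) := by
    intro x; rw [normsq]; ring
  simp only [h]
  rw [iadd hP (by fun_prop) (by fun_prop), iadd hP (by fun_prop) (by fun_prop), quad_int hP, quad_int hP,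
    quad_int hP, normsq, lam_bp0, lam_bp1, lam_bp2]
  have := lam_sum p
  ring_nf

end meas

end RM

namespace RM

/-- Squared distance to a finite set. -/
noncomputable def D (s : Finset E2) (x : E2) : ℝ := Metric.infDist x (s : Set E2) ^ 2

@[fun_prop]
lemma D_cont (s : Finset E2) : Continuous (D s) :=
  (Metric.continuous_infDist_pt _).pow 2

lemma D_nonneg (s : Finset E2) (x : E2) : 0 ≤ D s x := sq_nonneg _

lemma D_le {s : Finset E2} {a : E2} (ha : a ∈ s) (x : E2) : D s x ≤ ‖x - a‖ ^ 2 := by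
  have := Metric.infDist_le_dist_of_mem (x := x) (Finset.mem_coe.2 ha)
  rw [dist_eq_norm] at this
  exact pow_le_pow_left₀ Metric.infDist_nonneg this 2

lemma D_att {s : Finset E2} (hs : s.Nonempty) (x : E2) : ∃ a ∈ s, D s x = ‖x - a‖ ^ 2 := by
  obtain ⟨a, ha, h⟩ := s.finite_toSet.isCompact.exists_infDist_eq_dist hs x
  exact ⟨a, ha, by rw [D, h, dist_eq_norm]⟩

/-- Distortion as a real number. -/
noncomputable def EE (P : Measure E2) (s : Finset E2) : ℝ := ∫ x, D s x ∂P

section meas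
variable {P : Measure E2} [IsProbabilityMeasure P]

lemma err_eq (hP : P = (3 : ℝ≥0∞)⁻¹ • (P.map S1 + P.map S2 + P.map S3))
    {s : Finset E2} (hs : s.Nonempty) : err P (s : Set E2) = ENNReal.ofReal (EE P s) := by
  rw [EE, ofReal_integral_eq_lintegral_ofReal (integ hP (D_cont s))
    (Filter.Eventually.of_forall (D_nonneg s)), err]
  apply lintegral_congr
  intro x
  apply le_antisymm
  · obtain ⟨a, ha, h⟩ := D_att hs x
    rw [h]
    exact iInf₂_le a ha
  · exact le_iInf₂ fun a ha => ENNReal.ofReal_le_ofReal (D_le ha x)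

lemma lowq (hP : P = (3 : ℝ≥0∞)⁻¹ • (P.map S1 + P.map S2 + P.map S3)) (i : Fin 3)
    {f : E2 → ℝ} (hf : Continuous f) (a b c : ℝ)
    (h : ∀ x ∈ Tri, a * lam i x ^ 2 + b * lam i x + c ≤ f x) :
    a * (2/9) + b * (1/3) + c ≤ ∫ x, f x ∂P := by
  rw [← quad_int hP i]
  apply integral_mono_ae (integ hP (by fun_prop)) (integ hP hf)
  filter_upwards [ae_Tri hP] with x hx using h x hx

lemma sum3 (i : Fin 3) (f : Fin 3 → ℝ) : ∑ j, f j = f i + f (i+1) + f (i+2) := by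
  rw [Fin.sum_univ_three]
  fin_cases i <;> simp <;> ring

lemma ne1 (i : Fin 3) : i + 1 ≠ i := by fin_cases i <;> decide
lemma ne2 (i : Fin 3) : i + 2 ≠ i := by fin_cases i <;> decide
lemma ne3 (i : Fin 3) : i + 1 ≠ i + 2 := by fin_cases i <;> decide

lemma low2 (hP : P = (3 : ℝ≥0∞)⁻¹ • (P.map S1 + P.map S2 + P.map S3)) (i : Fin 3)
    {f : E2 → ℝ} (hf : Continuous f) (a b c : ℝ)
    (h : ∀ y ∈ Tri, a * lam i y ^ 2 + b * lam i y + c ≤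
      9 * f (Smap i y) + 9 * f (Smap (i+1) y) + 9 * f (Smap (i+2) y)) :
    (a * (2/9) + b * (1/3) + c) / 27 ≤ ∫ x, f x ∂P := by
  rw [self_int hP hf, sum3 i]
  have := lowq hP i (f := fun y => 9 * f (Smap i y) + 9 * f (Smap (i+1) y) + 9 * f (Smap (i+2) y))
    (by fun_prop) a b c h
  rw [iadd hP (by fun_prop) (by fun_prop), iadd hP (by fun_prop) (by fun_prop),
    integral_const_mul, integral_const_mul, integral_const_mul] at this
  linarith

/-- height bound -/
lemma height (i : Fin 3) (x a : E2) : 3/4 * (lam i x - lam i a) ^ 2 ≤ ‖x - a‖ ^ 2 := by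
  rw [normsq' i]
  have h1 := lam_sum' i x
  have h2 := lam_sum' i a
  have : lam i x - lam i a = -(lam (i+1) x - lam (i+1) a) - (lam (i+2) x - lam (i+2) a) := by
    linarith
  rw [this]
  nlinarith [sq_nonneg ((lam (i+1) x - lam (i+1) a) - (lam (i+2) x - lam (i+2) a))]

lemma height_le (i : Fin 3) (x a : E2) {κ z : ℝ} (ha : lam i a ≤ κ) (hz : 0 ≤ z)
    (hx : lam i x = κ + z / 3) : 3/4 * z ^ 2 ≤ 9 * ‖x - a‖ ^ 2 := by
  have := height i x a
  nlinarith

variable {β : Finset E2}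

lemma G0 (hP : P = (3 : ℝ≥0∞)⁻¹ • (P.map S1 + P.map S2 + P.map S3)) (hβ : β.Nonempty)
    (i : Fin 3) (h : ∀ a ∈ β, lam i a ≤ 1/2) : 29/48/9 ≤ ∫ x, D β (Smap i x) ∂P := by
  have := lowq hP i (f := fun x => D β (Smap i x)) (by fun_prop) (1/12) (1/12) (1/48) (by
    intro x hx
    obtain ⟨a, ha, e⟩ := D_att hβ (Smap i x)
    rw [e]
    have h0 := (mem_Tri x).1 hx i
    have := height_le i (Smap i x) a (h a ha) (z := lam i x + 1/2) (by linarith)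
      (by rw [lam_S_same]; ring)
    nlinarith)
  linarith

lemma M0 (hP : P = (3 : ℝ≥0∞)⁻¹ • (P.map S1 + P.map S2 + P.map S3)) (hβ : β.Nonempty)
    (i : Fin 3) (h : ∀ a ∈ β, lam i a ≤ 2/3) : 1/6/9 ≤ ∫ x, D β (Smap i x) ∂P := by
  have := lowq hP i (f := fun x => D β (Smap i x)) (by fun_prop) (1/12) 0 0 (by
    intro x hx
    obtain ⟨a, ha, e⟩ := D_att hβ (Smap i x)
    rw [e]
    have h0 := (mem_Tri x).1 hx i
    have := height_le i (Smap i x) a (h a ha) (z := lam i x) (by linarith)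
      (by rw [lam_S_same]; ring)
    nlinarith)
  linarith

lemma Texp (i : Fin 3) (y c : E2) : ∃ p q r : ℝ, p + q + r = -2/3 ∧
    p = lam i y / 3 - (3 * lam i c - 2) ∧
    9 * ‖Smap i (Smap i y) - c‖ ^ 2 = ((p + 2/3)^2 + q^2 + r^2) / 2 ∧
    9 * ‖Smap i (Smap (i+1) y) - c‖ ^ 2 = (p^2 + (q+2/3)^2 + r^2) / 2 ∧
    9 * ‖Smap i (Smap (i+2) y) - c‖ ^ 2 = (p^2 + q^2 + (r+2/3)^2) / 2 := by
  refine ⟨lam i y / 3 - (3 * lam i c - 2), lam (i+1) y / 3 - 3 * lam (i+1) c,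
    lam (i+2) y / 3 - 3 * lam (i+2) c, ?_, rfl, ?_, ?_, ?_⟩
  · have := lam_sum' i y; have := lam_sum' i c; linarith
  all_goals
    rw [normsq' i]
    simp only [lam_S_same, lam_S_ne (ne1 i), lam_S_ne (ne2 i), lam_S_ne (ne1 i).symm,
      lam_S_ne (ne2 i).symm, lam_S_ne (ne3 i), lam_S_ne (ne3 i).symm]
    ring

lemma far (i : Fin 3) {y a : E2} (hy : y ∈ Tri) (ha : lam i a ≤ 1/2) (j : Fin 3) :
    3/4 * (lam i y / 3 + 1/2) ^ 2 ≤ 9 * ‖Smap i (Smap j y) - a‖ ^ 2 := by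
  have h0 := (mem_Tri y).1 hy i
  have h1 : lam i y / 3 ≤ lam i (Smap j y) := by
    rw [lam_S]; split_ifs <;> linarith
  have := height_le i (Smap i (Smap j y)) a ha (z := lam i (Smap j y) + 1/2) (by linarith)
      (by rw [lam_S_same]; ring)
  nlinarith

lemma far0 (i : Fin 3) {y a : E2} (hy : y ∈ Tri) (ha : lam i a ≤ 1/2) :
    3/4 * (lam i y / 3 + 7/6) ^ 2 ≤ 9 * ‖Smap i (Smap i y) - a‖ ^ 2 := by
  have h0 := (mem_Tri y).1 hy i
  have := height_le i (Smap i (Smap i y)) a ha (z := lam i y / 3 + 7/6) (by linarith)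
      (by rw [lam_S_same, lam_S_same]; ring)
  exact this

lemma mis0 (i : Fin 3) {y a : E2} (hy : y ∈ Tri) (ha : lam i a ≤ 2/3) :
    3/4 * (lam i y / 3 + 2/3) ^ 2 ≤ 9 * ‖Smap i (Smap i y) - a‖ ^ 2 := by
  have h0 := (mem_Tri y).1 hy i
  have := height_le i (Smap i (Smap i y)) a ha (z := lam i y / 3 + 2/3) (by linarith)
      (by rw [lam_S_same, lam_S_same]; ring)
  exact this

lemma real_facts (p q r z : ℝ) (hs : p + q + r = -2/3) (T0 T1 T2 : ℝ)
    (t0 : T0 = ((p + 2/3)^2 + q^2 + r^2) / 2) (t1 : T1 = (p^2 + (q+2/3)^2 + r^2) / 2)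
    (t2 : T2 = (p^2 + q^2 + (r+2/3)^2) / 2) :
    4/9 ≤ T0 + T1 + T2 ∧ 2/9 ≤ T0 + T1 ∧ 2/9 ≤ T0 + T2 ∧ 2/9 ≤ T1 + T2 ∧
    (0 ≤ z → z ≤ p → 9/4 * z^2 + z + 5/9 ≤ T0 + T1 + T2 ∧
      3/2 * z^2 + z + 7/18 ≤ T0 + T1 ∧ 3/2 * z^2 + z + 7/18 ≤ T0 + T2) := by
  obtain rfl : r = -2/3 - p - q := by linarith
  subst t0 t1 t2
  refine ⟨?_, ?_, ?_, ?_, ?_⟩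
  · nlinarith [sq_nonneg (2 * q + p + 2/3), sq_nonneg (p + 2/9)]
  · nlinarith [sq_nonneg (2 * q + p + 1), sq_nonneg (p + 1/3)]
  · nlinarith [sq_nonneg (2 * q + p + 1/3), sq_nonneg (p + 1/3)]
  · nlinarith [sq_nonneg (2 * q + p + 2/3), sq_nonneg p]
  · intro hz hp
    have h : z ^ 2 ≤ p ^ 2 := pow_le_pow_left₀ hz hp 2
    refine ⟨?_, ?_, ?_⟩
    · nlinarith [sq_nonneg (2 * q + p + 2/3)]
    · nlinarith [sq_nonneg (2 * q + p + 1)]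
    · nlinarith [sq_nonneg (2 * q + p + 1/3)]

lemma G1 (hP : P = (3 : ℝ≥0∞)⁻¹ • (P.map S1 + P.map S2 + P.map S3)) (hβ : β.Nonempty)
    (i : Fin 3) (c : E2) (h : ∀ a ∈ β, a = c ∨ lam i a ≤ 1/2) :
    43/324/9 ≤ ∫ x, D β (Smap i x) ∂P := by
  have := low2 hP i (f := fun x => D β (Smap i x)) (by fun_prop) 0 (5/72) (3/8) (by
    intro y hy
    have hz := (mem_Tri y).1 hy i
    have hz1 : lam i y ≤ 1 := by
      have := lam_sum' i y
      have := (mem_Tri y).1 hy (i+1)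
      have := (mem_Tri y).1 hy (i+2)
      linarith
    have hj : ∀ j, 9 * D β (Smap i (Smap j y)) = 9 * ‖Smap i (Smap j y) - c‖ ^ 2 ∨
        3/4 * (lam i y / 3 + 1/2) ^ 2 ≤ 9 * D β (Smap i (Smap j y)) := by
      intro j
      obtain ⟨a, ha, e⟩ := D_att hβ (Smap i (Smap j y))
      rw [e]
      rcases h a ha with rfl | h'
      · left; rfl
      · right; exact far i hy h' j
    have n0 := D_nonneg β (Smap i (Smap i y))
    have n1 := D_nonneg β (Smap i (Smap (i+1) y))
    have n2 := D_nonneg β (Smap i (Smap (i+2) y))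
    have h0 := hj i
    have h1 := hj (i+1)
    have h2 := hj (i+2)
    obtain ⟨p, q, r, hs, -, t0, t1, t2⟩ := Texp i y c
    obtain ⟨f0, f1, f2, f3, -⟩ := real_facts p q r 0 hs _ _ _ t0 t1 t2
    have hf : 3/16 + lam i y / 4 ≤ 3/4 * (lam i y / 3 + 1/2) ^ 2 := by nlinarith
    rcases h0 with h0 | h0 <;> rcases h1 with h1 | h1 <;> rcases h2 with h2 | h2 <;> linarith)
  linarith

lemma G2 (hP : P = (3 : ℝ≥0∞)⁻¹ • (P.map S1 + P.map S2 + P.map S3)) (hβ : β.Nonempty)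
    (i : Fin 3) (c c' : E2) (h : ∀ a ∈ β, a = c ∨ a = c' ∨ lam i a ≤ 1/2) :
    1/16/9 ≤ ∫ x, D β (Smap i x) ∂P := by
  have := low2 hP i (f := fun x => D β (Smap i x)) (by fun_prop) 0 0 (3/16) (by
    intro y hy
    have hz := (mem_Tri y).1 hy i
    have hj : ∀ j, 9 * D β (Smap i (Smap j y)) = 9 * ‖Smap i (Smap j y) - c‖ ^ 2 ∨
        9 * D β (Smap i (Smap j y)) = 9 * ‖Smap i (Smap j y) - c'‖ ^ 2 ∨
        3/16 ≤ 9 * D β (Smap i (Smap j y)) := by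
      intro j
      obtain ⟨a, ha, e⟩ := D_att hβ (Smap i (Smap j y))
      rw [e]
      rcases h a ha with rfl | rfl | h'
      · left; rfl
      · right; left; rfl
      · right; right
        have := far i hy h' j
        nlinarith
    have n0 := D_nonneg β (Smap i (Smap i y))
    have n1 := D_nonneg β (Smap i (Smap (i+1) y))
    have n2 := D_nonneg β (Smap i (Smap (i+2) y))
    have h0 := hj i
    have h1 := hj (i+1)
    have h2 := hj (i+2)
    have pair : ∀ b, 2/9 ≤ 9 * ‖Smap i (Smap i y) - b‖ ^ 2 + 9 * ‖Smap i (Smap (i+1) y) - b‖ ^ 2 ∧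
        2/9 ≤ 9 * ‖Smap i (Smap i y) - b‖ ^ 2 + 9 * ‖Smap i (Smap (i+2) y) - b‖ ^ 2 ∧
        2/9 ≤ 9 * ‖Smap i (Smap (i+1) y) - b‖ ^ 2 + 9 * ‖Smap i (Smap (i+2) y) - b‖ ^ 2 := by
      intro b
      obtain ⟨p, q, r, hs, -, t0, t1, t2⟩ := Texp i y b
      rw [t0, t1, t2]
      refine ⟨?_, ?_, ?_⟩
      · nlinarith [sq_nonneg (p + 1/3), sq_nonneg (q+1/3), sq_nonneg r]
      · nlinarith [sq_nonneg (p + 1/3), sq_nonneg (r+1/3), sq_nonneg q]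
      · nlinarith [sq_nonneg (q + 1/3), sq_nonneg (r+1/3), sq_nonneg p]
    obtain ⟨c1, c2, c3⟩ := pair c
    obtain ⟨d1, d2, d3⟩ := pair c'
    rcases h0 with h0 | h0 | h0 <;> rcases h1 with h1 | h1 | h1 <;>
      rcases h2 with h2 | h2 | h2 <;> linarith)
  linarith

lemma M1 (hP : P = (3 : ℝ≥0∞)⁻¹ • (P.map S1 + P.map S2 + P.map S3)) (hβ : β.Nonempty)
    (i : Fin 3) (c : E2) (h : ∀ a ∈ β, a = c ∨ lam i a ≤ 1/2) (hm : ∀ a ∈ β, lam i a ≤ 2/3)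
    (hc : c ∈ β) :
    13/54/9 ≤ ∫ x, D β (Smap i x) ∂P := by
  have := low2 hP i (f := fun x => D β (Smap i x)) (by fun_prop) (1/4) (1/3) (5/9) (by
    intro y hy
    have hz := (mem_Tri y).1 hy i
    have hz1 : lam i y ≤ 1 := by
      have := lam_sum' i y
      have := (mem_Tri y).1 hy (i+1)
      have := (mem_Tri y).1 hy (i+2)
      linarith
    have hj : ∀ j, 9 * D β (Smap i (Smap j y)) = 9 * ‖Smap i (Smap j y) - c‖ ^ 2 ∨
        3/4 * (lam i y / 3 + 1/2) ^ 2 ≤ 9 * D β (Smap i (Smap j y)) := by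
      intro j
      obtain ⟨a, ha, e⟩ := D_att hβ (Smap i (Smap j y))
      rw [e]
      rcases h a ha with rfl | h'
      · left; rfl
      · right; exact far i hy h' j
    have hi0 : 9 * D β (Smap i (Smap i y)) = 9 * ‖Smap i (Smap i y) - c‖ ^ 2 ∨
        3/4 * (lam i y / 3 + 7/6) ^ 2 ≤ 9 * D β (Smap i (Smap i y)) := by
      obtain ⟨a, ha, e⟩ := D_att hβ (Smap i (Smap i y))
      rw [e]
      rcases h a ha with rfl | h'
      · left; rfl
      · right; exact far0 i hy h'
    have m0 : 3/4 * (lam i y / 3 + 2/3) ^ 2 ≤ 9 * D β (Smap i (Smap i y)) := by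
      obtain ⟨a, ha, e⟩ := D_att hβ (Smap i (Smap i y))
      rw [e]
      exact mis0 i hy (hm a ha)
    have n1 := D_nonneg β (Smap i (Smap (i+1) y))
    have n2 := D_nonneg β (Smap i (Smap (i+2) y))
    have h1 := hj (i+1)
    have h2 := hj (i+2)
    obtain ⟨p, q, r, hs, hp, t0, t1, t2⟩ := Texp i y c
    have hpz : lam i y / 3 ≤ p := by
      have := hm c hc
      linarith
    obtain ⟨f0, f1, f2, f3, f4⟩ := real_facts p q r (lam i y / 3) hs _ _ _ t0 t1 t2
    obtain ⟨g0, g1, g2⟩ := f4 (by linarith) hpz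
    have hw : lam i y ^ 2 ≤ lam i y := by
      have := mul_le_mul_of_nonneg_left hz1 hz
      rw [sq]; linarith only [this]
    have hw0 : 0 ≤ lam i y ^ 2 := sq_nonneg _
    clear hpz t0 t1 t2 hp hs
    ring_nf at hi0 h1 h2 m0 g0 g1 g2 f3 ⊢
    rcases hi0 with h0 | h0 <;> rcases h1 with h1 | h1 <;> rcases h2 with h2 | h2 <;> linarith)
  linarith

end meas
end RM

namespace RM
section meas
open Classical
variable {P : Measure E2} [IsProbabilityMeasure P]

lemma EE_le (hP : P = (3 : ℝ≥0∞)⁻¹ • (P.map S1 + P.map S2 + P.map S3))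
    (γ : Finset E2) : EE P γ = (1/3) * ∑ i, ∫ x, D γ (Smap i x) ∂P :=
  self_int hP (D_cont γ)

/-- Union of scaled copies. -/
noncomputable def comb (R : Fin 3 → Finset E2) : Finset E2 :=
  Finset.univ.biUnion fun i => (R i).image (Smap i)

lemma comb_card (R : Fin 3 → Finset E2) : (comb R).card ≤ ∑ i, (R i).card :=
  Finset.card_biUnion_le.trans (Finset.sum_le_sum fun _ _ => Finset.card_image_le)

lemma comb_ne (R : Fin 3 → Finset E2) (h : (R 0).Nonempty) : (comb R).Nonempty := by
  obtain ⟨a, ha⟩ := h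
  exact ⟨Smap 0 a, Finset.mem_biUnion.2 ⟨0, Finset.mem_univ _, Finset.mem_image_of_mem _ ha⟩⟩

lemma comb_EE (hP : P = (3 : ℝ≥0∞)⁻¹ • (P.map S1 + P.map S2 + P.map S3))
    (R : Fin 3 → Finset E2) (h : ∀ i, (R i).Nonempty) :
    EE P (comb R) ≤ (1/27) * ∑ i, EE P (R i) := by
  rw [EE_le hP]
  have : ∀ i, ∫ x, D (comb R) (Smap i x) ∂P ≤ EE P (R i) / 9 := by
    intro i
    rw [EE, ← integral_div]
    apply integral_mono (integ hP (by fun_prop)) (integ hP (by fun_prop))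
    intro x
    obtain ⟨a, ha, e⟩ := D_att (h i) x
    simp only
    rw [e, ← norm_S i]
    exact D_le (Finset.mem_biUnion.2 ⟨i, Finset.mem_univ _, Finset.mem_image_of_mem _ ha⟩) _
  have := Finset.sum_le_sum fun i (_ : i ∈ Finset.univ) => this i
  rw [← Finset.sum_div] at this
  linarith

/-- Reference upper bounds. -/
noncomputable def F (k : ℕ) : ℝ := if k ≤ 1 then 1/6 else if k = 2 then 5/54 else 1/54

lemma R1 (hP : P = (3 : ℝ≥0∞)⁻¹ • (P.map S1 + P.map S2 + P.map S3)) :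
    EE P {bp (1/3) (1/3)} ≤ 1/6 := by
  have := dist_int hP (bp (1/3) (1/3))
  simp only [sub_self, norm_zero] at this
  have h2 : EE P {bp (1/3) (1/3)} ≤ ∫ x, ‖x - bp (1/3) (1/3)‖ ^ 2 ∂P := by
    apply integral_mono (integ hP (by fun_prop)) (integ hP (by fun_prop))
    intro x
    exact D_le (by simp) x
  linarith

lemma R2 (hP : P = (3 : ℝ≥0∞)⁻¹ • (P.map S1 + P.map S2 + P.map S3)) :
    EE P {bp (1/9) (1/9), bp (4/9) (4/9)} ≤ 5/54 := by
  rw [EE_le hP, Fin.sum_univ_three]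
  have key : ∀ (i : Fin 3) (a b : E2), a ∈ ({bp (1/9) (1/9), bp (4/9) (4/9)} : Finset E2) →
      Smap i b = a → ∫ x, D {bp (1/9) (1/9), bp (4/9) (4/9)} (Smap i x) ∂P
        ≤ (1/6 + ‖b - bp (1/3) (1/3)‖ ^ 2) / 9 := by
    intro i a b ha hb
    rw [← dist_int hP, ← integral_div]
    apply integral_mono (integ hP (by fun_prop)) (integ hP (by fun_prop))
    intro x
    simp only
    rw [← norm_S i, hb]
    exact D_le ha _
  have k0 := key 0 _ (bp (1/3) (1/3)) (Finset.mem_insert_self _ _) (by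
    apply eq_of_lam; intro j
    rw [lam_S]
    fin_cases j <;> simp [lam_bp0, lam_bp1, lam_bp2] <;> norm_num)
  have k1 := key 1 (bp (4/9) (4/9)) (bp (-2/3) (4/3)) (by simp) (by
    apply eq_of_lam; intro j
    rw [lam_S]
    fin_cases j <;> simp [lam_bp0, lam_bp1, lam_bp2] <;> norm_num)
  have k2 := key 2 (bp (4/9) (4/9)) (bp (4/3) (-2/3)) (by simp) (by
    apply eq_of_lam; intro j
    rw [lam_S]
    fin_cases j <;> simp [lam_bp0, lam_bp1, lam_bp2] <;> norm_num)
  rw [normsq] at k0 k1 k2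
  simp only [lam_bp0, lam_bp1, lam_bp2] at k0 k1 k2
  linarith

lemma exR (hP : P = (3 : ℝ≥0∞)⁻¹ • (P.map S1 + P.map S2 + P.map S3)) (k : ℕ) (hk : 1 ≤ k) :
    ∃ R : Finset E2, R.Nonempty ∧ R.card ≤ k ∧ EE P R ≤ F k := by
  by_cases h1 : k ≤ 1
  · exact ⟨{bp (1/3) (1/3)}, by simp, by simpa using hk, by rw [F, if_pos h1]; exact R1 hP⟩
  by_cases h2 : k = 2
  · refine ⟨{bp (1/9) (1/9), bp (4/9) (4/9)}, by simp, ?_, ?_⟩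
    · rw [h2]; exact Finset.card_le_two
    · rw [F, if_neg h1, if_pos h2]; exact R2 hP
  · refine ⟨comb fun _ => {bp (1/3) (1/3)}, comb_ne _ (by simp), ?_, ?_⟩
    · refine (comb_card _).trans ?_
      simp; omega
    · rw [F, if_neg h1, if_neg h2]
      have := comb_EE hP (fun _ => {bp (1/3) (1/3)}) (by simp)
      have h := R1 hP
      rw [Fin.sum_univ_three] at this
      linarith

lemma main (hP : P = (3 : ℝ≥0∞)⁻¹ • (P.map S1 + P.map S2 + P.map S3))
    {β : Finset E2} (hβ : β.Nonempty) (hT : ∀ a ∈ β, a ∈ Tri) (n : ℕ) (hn : 3 ≤ n)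
    (hc : β.card ≤ n) (i : Fin 3) (hm : ∀ a ∈ β, lam i a ≤ 2/3) :
    ∃ γ : Finset E2, γ.Nonempty ∧ γ.card ≤ n ∧ EE P γ < EE P β := by
  have hQ0 : ∀ j, 0 ≤ ∫ x, D β (Smap j x) ∂P := fun j => integral_nonneg fun x => D_nonneg _ _
  by_cases hz : ∃ j : Fin 3, ∀ a ∈ β, lam j a ≤ 1/2
  · obtain ⟨j, hj⟩ := hz
    refine ⟨comb fun _ => {bp (1/3) (1/3)}, comb_ne _ (by simp), ?_, ?_⟩
    · refine (comb_card _).trans ?_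
      simp; omega
    · have := comb_EE hP (fun _ => {bp (1/3) (1/3)}) (by simp)
      have h := R1 hP
      rw [Fin.sum_univ_three] at this
      have g := G0 hP hβ j hj
      rw [EE_le hP β, sum3 j]
      have := hQ0 (j+1)
      have := hQ0 (j+2)
      linarith
  push Not at hz
  set C : Fin 3 → Finset E2 := fun j => β.filter fun a => 1/2 < lam j a with hC
  have hC1 : ∀ j, 1 ≤ (C j).card := by
    intro j
    obtain ⟨a, ha, h⟩ := hz j
    exact Finset.card_pos.2 ⟨a, Finset.mem_filter.2 ⟨ha, h⟩⟩
  have hCsum : ∑ j, (C j).card ≤ n := by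
    rw [← Finset.card_biUnion]
    · refine (Finset.card_le_card ?_).trans hc
      intro a ha
      obtain ⟨j, -, h⟩ := Finset.mem_biUnion.1 ha
      exact (Finset.mem_filter.1 h).1
    · intro j _ k _ hjk
      change Disjoint (C j) (C k)
      rw [Finset.disjoint_left]
      intro a ha hb
      obtain ⟨ha1, ha2⟩ := Finset.mem_filter.1 ha
      obtain ⟨-, hb2⟩ := Finset.mem_filter.1 hb
      have hpos := (mem_Tri a).1 (hT a ha1)
      have p0 := hpos 0
      have p1 := hpos 1
      have p2 := hpos 2
      have hs := lam_sum a
      fin_cases j <;> fin_cases k <;> simp at hjk ha2 hb2 <;> linarith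
  have hone : ∀ j, (C j).card = 1 → ∃ c ∈ β, ∀ a ∈ β, a = c ∨ lam j a ≤ 1/2 := by
    intro j h
    obtain ⟨c, hc⟩ := Finset.card_eq_one.1 h
    refine ⟨c, ?_, ?_⟩
    · have : c ∈ C j := by rw [hc]; simp
      exact (Finset.mem_filter.1 this).1
    · intro a ha
      by_cases h' : lam j a ≤ 1/2
      · exact Or.inr h'
      · left
        have : a ∈ C j := Finset.mem_filter.2 ⟨ha, not_le.1 h'⟩
        rw [hc] at this
        simpa using this
  have htwo : ∀ j, (C j).card = 2 → ∃ c c', ∀ a ∈ β, a = c ∨ a = c' ∨ lam j a ≤ 1/2 := by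
    intro j h
    obtain ⟨c, c', -, hc⟩ := Finset.card_eq_two.1 h
    refine ⟨c, c', ?_⟩
    intro a ha
    by_cases h' : lam j a ≤ 1/2
    · exact Or.inr (Or.inr h')
    · have : a ∈ C j := Finset.mem_filter.2 ⟨ha, not_le.1 h'⟩
      rw [hc] at this
      simp at this
      tauto
  have hG : ∀ j, (F (C j).card - 11/324) / 9 ≤ ∫ x, D β (Smap j x) ∂P := by
    intro j
    rcases (by have := hC1 j; omega : (C j).card = 1 ∨ (C j).card = 2 ∨ 3 ≤ (C j).card)
      with h | h | h
    · obtain ⟨c, -, hc⟩ := hone j h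
      have := G1 hP hβ j c hc
      rw [h]; norm_num [F]; linarith
    · obtain ⟨c, c', hc⟩ := htwo j h
      have := G2 hP hβ j c c' hc
      rw [h]; norm_num [F]; linarith
    · have := hQ0 j
      rw [F, if_neg (by omega), if_neg (by omega)]; linarith
  have hM : (F (C i).card + 4/54) / 9 ≤ ∫ x, D β (Smap i x) ∂P := by
    have h0 := M0 hP hβ i hm
    rcases (by have := hC1 i; omega : (C i).card = 1 ∨ (C i).card = 2 ∨ 3 ≤ (C i).card)
      with h | h | h
    · obtain ⟨c, hcb, hc⟩ := hone i h
      have := M1 hP hβ i c hc hm hcb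
      rw [h]; norm_num [F]; linarith
    · rw [h]; norm_num [F]; linarith
    · rw [F, if_neg (by omega), if_neg (by omega)]; linarith
  choose R hR1 hR2 hR3 using fun j => exR hP (C j).card (hC1 j)
  refine ⟨comb R, comb_ne R (hR1 0), ?_, ?_⟩
  · exact (comb_card R).trans ((Finset.sum_le_sum fun j _ => hR2 j).trans hCsum)
  · have h1 := comb_EE hP R hR1
    rw [EE_le hP β, sum3 i]
    rw [sum3 i] at h1
    have := hR3 i
    have := hR3 (i+1)
    have := hR3 (i+2)
    have := hG (i+1)
    have := hG (i+2)
    linarith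

lemma proj (a : E2) : ∃ p ∈ Tri, (a ∈ Tri → p = a) ∧
    ∀ x ∈ Tri, ‖x - p‖ ^ 2 + ‖a - p‖ ^ 2 ≤ ‖x - a‖ ^ 2 := by
  by_cases ha : a ∈ Tri
  · exact ⟨a, ha, fun _ => rfl, fun x _ => by simp⟩
  have hcv : Convex ℝ Tri := convex_convexHull ℝ _
  have hne : Tri.Nonempty := ⟨pt 0 0, subset_convexHull ℝ _ (by simp)⟩
  obtain ⟨p, hp, h⟩ := exists_norm_eq_iInf_of_complete_convex hne Tri_compact.isComplete hcv a
  refine ⟨p, hp, fun h => absurd h ha, fun x hx => ?_⟩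
  have := (norm_eq_iInf_iff_real_inner_le_zero hcv hp).1 h x hx
  have e : x - a = (x - p) - (a - p) := by abel
  have h3 := real_inner_comm (x - p) (a - p)
  rw [e, norm_sub_sq_real (x - p) (a - p)]
  linarith

lemma final (hP : P = (3 : ℝ≥0∞)⁻¹ • (P.map S1 + P.map S2 + P.map S3))
    {α : Finset E2} (hα : α.Nonempty) (n : ℕ) (hn : 3 ≤ n)
    (hc : α.card ≤ n) (i : Fin 3)
    (hopt : ∀ γ : Finset E2, γ.Nonempty → γ.card ≤ n → EE P α ≤ EE P γ) :
    ∃ a ∈ α, a ∈ Smap i '' Tri := by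
  by_contra hcon
  push Not at hcon
  choose π hπ1 hπ2 hπ3 using proj
  set α' := α.image π with hα'
  have hα'n : α'.Nonempty := hα.image π
  have hle : ∀ x ∈ Tri, D α' x ≤ D α x := by
    intro x hx
    obtain ⟨a, ha, e⟩ := D_att hα x
    rw [e]
    refine (D_le (Finset.mem_image_of_mem π ha) x).trans ?_
    have := hπ3 a x hx
    nlinarith [sq_nonneg ‖a - π a‖]
  have h1 := hopt α' hα'n (Finset.card_image_le.trans hc)
  have hae : (fun x => D α x - D α' x) =ᵐ[P] 0 := by
    rw [← integral_eq_zero_iff_of_nonneg_ae]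
    · apply le_antisymm
      · rw [integral_sub (integ hP (D_cont _)) (integ hP (D_cont _))]
        unfold EE at h1
        linarith
      · apply integral_nonneg_of_ae
        filter_upwards [ae_Tri hP] with x hx
        exact sub_nonneg.2 (hle x hx)
    · filter_upwards [ae_Tri hP] with x hx
      exact sub_nonneg.2 (hle x hx)
    · exact integ hP (by fun_prop)
  set β := α.filter fun a => a ∈ Tri with hβ
  have hatt : ∀ᵐ x ∂P, ∃ a ∈ β, D α x = ‖x - a‖ ^ 2 := by
    filter_upwards [hae, ae_Tri hP] with x hx hxT
    obtain ⟨a, ha, e⟩ := D_att hα x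
    refine ⟨a, ?_, e⟩
    simp only [Pi.zero_apply] at hx
    have h2 := D_le (Finset.mem_image_of_mem π ha) x
    have h3 := hπ3 a x hxT
    have h4 : ‖a - π a‖ ^ 2 ≤ 0 := by linarith
    have h5 : a - π a = 0 := by
      rw [← norm_eq_zero]
      exact pow_eq_zero_iff two_ne_zero |>.1 (le_antisymm h4 (sq_nonneg _))
    refine Finset.mem_filter.2 ⟨ha, ?_⟩
    rw [sub_eq_zero.1 h5]
    exact hπ1 a
  have hβn : β.Nonempty := by
    obtain ⟨x, a, ha, -⟩ := hatt.exists
    exact ⟨a, ha⟩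
  have hEE : EE P β ≤ EE P α := by
    apply integral_mono_ae (integ hP (D_cont _)) (integ hP (D_cont _))
    filter_upwards [hatt] with x ⟨a, ha, e⟩
    rw [e]; exact D_le ha x
  obtain ⟨γ, g1, g2, g3⟩ := main hP hβn (fun a ha => (Finset.mem_filter.1 ha).2) n hn
    ((Finset.card_filter_le _ _).trans hc) i (by
      intro a ha
      obtain ⟨ha1, ha2⟩ := Finset.mem_filter.1 ha
      by_contra h
      exact hcon a ha1 (mem_image ha2 i (not_le.1 h).le))
  have := hopt γ g1 g2
  linarith

end meas
end RM

/-- If α is an optimal set of n-means for the R-measure P with n ≥ 3, then α meets each of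
the basic triangles △_i = S_i(△), i ∈ {1,2,3}. -/
theorem stmt_6 (P : Measure E2) [IsProbabilityMeasure P]
    (hP : P = (3 : ℝ≥0∞)⁻¹ • (P.map S1 + P.map S2 + P.map S3))
    (n : ℕ) (hn : 3 ≤ n) (α : Set E2) (hα : IsOptimal P n α) :
    ∀ i : Fin 3, (α ∩ Smap i '' Tri).Nonempty := by
  intro i
  obtain ⟨hfin, hcard, hopt⟩ := hα
  have hle : ∀ γ : Finset E2, γ.card ≤ n → err P α ≤ err P (γ : Set E2) := by
    intro γ hγ
    rw [hopt, quantErr]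
    exact iInf₂_le (γ : Set E2) ⟨γ.finite_toSet, by rwa [Set.ncard_coe_finset]⟩
  lift α to Finset E2 using hfin
  rw [Set.ncard_coe_finset] at hcard
  have hne : α.Nonempty := by
    rw [Finset.nonempty_iff_ne_empty]
    rintro rfl
    have h := hle {pt 0 0} (by simp; omega)
    rw [RM.err_eq hP (Finset.singleton_nonempty (pt 0 0))] at h
    simp [err] at h
  obtain ⟨a, ha, hb⟩ := RM.final hP hne n hn hcard i (by
    intro γ g1 g2
    have h := hle γ g2
    rw [RM.err_eq hP hne, RM.err_eq hP g1] at h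
    refine (ENNReal.ofReal_le_ofReal_iff ?_).1 h
    exact integral_nonneg fun x => RM.D_nonneg _ _)
  exact ⟨a, ha, hb⟩

end
end
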